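/- arXiv:2411.03516 — 2 statements merged into one kernel-verified Lean document; each statement's English description precedes it below -/
import Mathlib

section
/- Let s ∈ L_e. Then: (i) for any r ∈ L, the word s•r belongs to L_e and L(s•r) = s•L(r); and (ii) for any r, t ∈ L, the substitution operation is associative: (s•r)•t = s•(r•t). -/
open Set Filter MeasureTheory Topology

noncomputable section

/-- The β-transformation `x ↦ βx - ⌊βx⌋`. -/
def Tbeta (β x : ℝ) : ℝ := Int.fract (β * x)

/-- The survivor set `K_β(t)`: points of `[0,1)` whose orbit never enters `[0,t)`. -/
def survivor (β t : ℝ) : Set ℝ :=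
  {x | x ∈ Set.Ico (0 : ℝ) 1 ∧ ∀ n : ℕ, t ≤ (Tbeta β)^[n] x}

/-- The set-valued bifurcation set `E_β`. -/
def Ebif (β : ℝ) : Set ℝ :=
  {t | t ∈ Set.Ico (0 : ℝ) 1 ∧ ∀ t' : ℝ, t < t' → survivor β t' ≠ survivor β t}

/-- `(c)_β = Σ_{i≥1} c_i β^{-i}` for an infinite digit sequence (indexed from `0`). -/
def valSeq (β : ℝ) (c : ℕ → ℕ) : ℝ := ∑' i : ℕ, (c i : ℝ) / β ^ (i + 1)

/-- `(w 0^∞)_β` for a finite word `w`. -/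
def valWord (β : ℝ) (w : List ℕ) : ℝ :=
  ∑ i ∈ Finset.range w.length, (w.getD i 0 : ℝ) / β ^ (i + 1)

/-- `w⁺`: increment the last letter of `w`. -/
def wplus (w : List ℕ) : List ℕ := w.dropLast ++ [w.getLast! + 1]

/-- `w⁻`: decrement the last letter of `w`. -/
def wminus (w : List ℕ) : List ℕ := w.dropLast ++ [w.getLast! - 1]

/-- `θ`: increment every digit of `w` by one. -/
def theta (w : List ℕ) : List ℕ := w.map (· + 1)

/-- `L(w)`: the lexicographically largest cyclic permutation of `w`. -/
def maxCyc (w : List ℕ) : List ℕ := ((List.range w.length).map w.rotate).foldl max []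

/-- `w^∞`: the periodic sequence with period block `w`. -/
def perSeq (w : List ℕ) : ℕ → ℕ := fun i => w.getD (i % w.length) 0

/-- The sequence given by the word `w` followed by the sequence `c`. -/
def wordSeq (w : List ℕ) (c : ℕ → ℕ) : ℕ → ℕ :=
  fun i => if i < w.length then w.getD i 0 else c (i - w.length)

/-- Strict lexicographic order `≺` on sequences. -/
def seqLt (x y : ℕ → ℕ) : Prop := ∃ n, (∀ i < n, x i = y i) ∧ x n < y n

/-- Lexicographic order `≼` on sequences. -/
def seqLe (x y : ℕ → ℕ) : Prop := x = y ∨ seqLt x y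

/-- The `n`-fold left shift `σⁿ` on sequences. -/
def shiftn (n : ℕ) (x : ℕ → ℕ) : ℕ → ℕ := fun i => x (i + n)

/-- One step of the Farey recursion: insert the concatenation `w_i w_{i+1}`
between consecutive entries. -/
def fareyInsert : List (List ℕ) → List (List ℕ)
  | [] => []
  | [w] => [w]
  | w :: v :: rest => w :: (w ++ v) :: fareyInsert (v :: rest)

/-- The ordered set `F_n` of Farey words of level `n`. -/
def fareyLevel : ℕ → List (List ℕ)
  | 0 => [[0], [1]]
  | n + 1 => fareyInsert (fareyLevel n)

/-- `F`: all Farey words of length at least two. -/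
def FareySet : Set (List ℕ) := {w | (∃ n, w ∈ fareyLevel n) ∧ w ≠ [0] ∧ w ≠ [1]}

/-- `F̂ = F ∪ {1}`. -/
def FareyHat : Set (List ℕ) := FareySet ∪ {[1]}

/-- The extended Farey set `F_e = {θ^k(w) : w ∈ F̂, k ≥ 0}`. -/
def FareyExt : Set (List ℕ) := {w | ∃ v ∈ FareyHat, ∃ k : ℕ, w = theta^[k] v}

/-- A nonempty word is Lyndon iff it is strictly smaller than each of its nontrivial
cyclic rotations (equivalently: aperiodic and lexicographically smallest among its
cyclic permutations). -/
def IsLyndon (w : List ℕ) : Prop := w ≠ [] ∧ ∀ i, 0 < i → i < w.length → w < w.rotate i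

/-- `L_e`: all Lyndon words over `ℕ ∪ {0}` except the single-letter word `0`. -/
def LyndonExt : Set (List ℕ) := {w | IsLyndon w ∧ w ≠ [0]}

/-- `L`: Lyndon words over `{0,1}` of length at least `2`. -/
def LyndonBin : Set (List ℕ) := {w | IsLyndon w ∧ 2 ≤ w.length ∧ ∀ d ∈ w, d ≤ 1}

/-- The block of `Φ_s` emitted for current digit `d` after previous digit `p`:
`L(s)` for `00`, `s⁻` for `10`, `L(s)⁺` for `01`, `s` for `11`. -/
def phiBlock (s : List ℕ) (p d : ℕ) : List ℕ :=
  if d = 0 then (if p = 0 then maxCyc s else wminus s)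
  else (if p = 0 then wplus (maxCyc s) else s)

def phiAux (s : List ℕ) : ℕ → List ℕ → List ℕ
  | _, [] => []
  | p, d :: rest => phiBlock s p d ++ phiAux s d rest

/-- The substitution `Φ_s` on finite words; `s • r = subst s r`.  An initial digit `0`
produces `s⁻`, an initial digit `1` produces `L(s)⁺`, and thereafter runs
`0^k` resp. `1^l` produce `L(s)^{k-1}` resp. `s^{l-1}`, in accordance with
`Φ_s(0^{k₁}1^{l₁}…) = s⁻ L(s)^{k₁-1} L(s)⁺ s^{l₁-1} …` and
`Φ_s(1^{k₁}0^{l₁}…) = L(s)⁺ s^{k₁-1} s⁻ L(s)^{l₁-1} …`. -/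
def subst (s r : List ℕ) : List ℕ :=
  match r with
  | [] => []
  | d :: rest => phiBlock s (1 - d) d ++ phiAux s d rest

/-- The substitution `Φ_s` on infinite sequences, as the limit of its values
on initial segments (each digit contributes a nonempty block, so the `i`-th letter
is determined by the first `i+1` digits). -/
def phiSeq (s : List ℕ) (c : ℕ → ℕ) : ℕ → ℕ :=
  fun i => (subst s (List.ofFn fun j : Fin (i + 1) => c j)).getD i 0

/-- `Λ_e(m) = {s₁ • s₂ • … • s_m : s₁ ∈ F_e, s₂,…,s_m ∈ F}`. -/
def LambdaE (m : ℕ) : Set (List ℕ) :=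
  {w | ∃ s₁ ∈ FareyExt, ∃ rs : List (List ℕ),
    rs.length = m - 1 ∧ (∀ r ∈ rs, r ∈ FareySet) ∧ w = rs.foldl subst s₁}

/-- `Λ_e = ∪_{m≥1} Λ_e(m)`. -/
def LambdaExt : Set (List ℕ) := ⋃ m ∈ Set.Ici 1, LambdaE m

/-- `β_ℓ^S`: the base `β > 1` with `(L(S)^∞)_β = 1` (it is unique since
`β ↦ (c)_β` is strictly decreasing). -/
def betaL (S : List ℕ) : ℝ :=
  Classical.epsilon fun β : ℝ => 1 < β ∧ valSeq β (perSeq (maxCyc S)) = 1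

/-- `β_*^S`: the base `β > 1` with `(L(S)⁺ S⁻ L(S)^∞)_β = 1`. -/
def betaStar (S : List ℕ) : ℝ :=
  Classical.epsilon fun β : ℝ =>
    1 < β ∧ valSeq β (wordSeq (wplus (maxCyc S) ++ wminus S) (perSeq (maxCyc S))) = 1

/-- `β_r^S`: the base `β > 1` with `(L(S)⁺ S^∞)_β = 1`. -/
def betaR (S : List ℕ) : ℝ :=
  Classical.epsilon fun β : ℝ => 1 < β ∧ valSeq β (wordSeq (wplus (maxCyc S)) (perSeq S)) = 1

/-- The Lyndon/Farey interval `J^S = [β_ℓ^S, β_r^S]`. -/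
def Jint (S : List ℕ) : Set ℝ := Set.Icc (betaL S) (betaR S)

/-- The basic interval `I^S = [β_ℓ^S, β_*^S]`. -/
def Iint (S : List ℕ) : Set ℝ := Set.Icc (betaL S) (betaStar S)

/-- The exceptional set `E = (1,∞) ∖ ∪_{s ∈ F_e} J^s`. -/
def Eexc : Set ℝ := Set.Ioi 1 \ ⋃ s ∈ FareyExt, Jint s

/-- The relative exceptional set `E^S = (J^S ∖ I^S) ∖ ∪_{r ∈ F} J^{S•r}`. -/
def EexcRel (S : List ℕ) : Set ℝ :=
  (Jint S \ Iint S) \ ⋃ r ∈ FareySet, Jint (subst S r)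

/-- The infinitely renormalizable set `E_∞ = ∩_{m≥1} ∪_{S ∈ Λ_e(m)} J^S`. -/
def Einf : Set ℝ := ⋂ m ∈ Set.Ici 1, ⋃ S ∈ LambdaE m, Jint S

/-- `E_L = E ∪ {β_ℓ^s : s ∈ F_e}`. -/
def EL : Set ℝ := Eexc ∪ {x | ∃ s ∈ FareyExt, x = betaL s}

/-- The critical value `τ(β) = min{t > 0 : dim_H K_β(t) = 0}`. -/
def tau (β : ℝ) : ℝ := sInf {t : ℝ | 0 < t ∧ dimH (survivor β t) = 0}

end

/-!
Read cyclically, `Φ_s` is a transducer emitting, for each letter, a block of length `|s|` that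
depends on that letter and the preceding one. To see that `s • r` strictly precedes its rotations,
note that its first block is `s⁻`. A rotation by a multiple of `|s|` is the image of a rotation of
`r`, and the transducer is monotone; if that rotation ends in `0`, its image starts with `L(s)` or
`L(s)⁺`, which already exceed `s⁻`. Any other rotation starts with a window straddling two blocks,
and such a window exceeds `s⁻` because `s` and `L(s)` are the extreme rotations of `s`.
Reversing the order and exchanging `0` and `1` turns this argument into the proof that `s • L(r)`
strictly exceeds its rotations, whence `L(s • r) = s • L(r)`.

Associativity is composition of transducers: the block of `Φ_r` emitted for the letter `d` ends in
`d`, so the memory of `Φ_s` after reading that block agrees with the memory of `Φ_r`.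
-/

section LexDiff

variable {α : Type*} {R : α → α → Prop} {u v w x y : List α}

/-- Strict lexicographic order in which neither word is a prefix of the other: at the first
position where `u` and `v` differ, both words have a letter, and these letters are related by `R`.
Unlike `List.Lex` it is stable under extending both words, and it reverses with `R`. -/
inductive LexDiff (R : α → α → Prop) : List α → List α → Prop
  | rel {a b : α} (hab : R a b) (u v : List α) : LexDiff R (a :: u) (b :: v)
  | cons (a : α) {u v : List α} (huv : LexDiff R u v) : LexDiff R (a :: u) (a :: v)

namespace LexDiff

theorem swap (h : LexDiff R u v) : LexDiff (Function.swap R) v u := by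
  induction h with
  | rel hab u v => exact rel (R := Function.swap R) hab v u
  | cons a _ ih => exact cons a ih

theorem append (h : LexDiff R u v) (x y : List α) : LexDiff R (u ++ x) (v ++ y) := by
  induction h with
  | rel hab u v => exact rel hab _ _
  | cons a _ ih => exact cons a ih

theorem append_left (h : LexDiff R u v) : ∀ w : List α, LexDiff R (w ++ u) (w ++ v)
  | [] => h
  | a :: w => cons a (h.append_left w)

theorem or_of_append (hl : u.length = v.length) (h : LexDiff R (u ++ x) (v ++ y)) :
    LexDiff R u v ∨ u = v ∧ LexDiff R x y := by
  induction u generalizing v with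
  | nil =>
    obtain rfl := List.length_eq_zero_iff.mp hl.symm
    exact .inr ⟨rfl, h⟩
  | cons a u ih =>
    obtain ⟨b, v, rfl⟩ := List.exists_cons_of_length_eq_add_one hl.symm
    cases h with
    | rel hab => exact .inl (rel hab u v)
    | cons _ h => exact (ih (by simpa using hl) h).imp (cons a) (And.imp_left (congrArg _))

theorem irrefl [Std.Irrefl R] (u : List α) : ¬ LexDiff R u u := by
  induction u with
  | nil => nofun
  | cons a u ih =>
    rintro (⟨h, -, -⟩ | ⟨-, h⟩)
    exacts [irrefl_of R a h, ih h]

theorem trans [IsTrans α R] (h : LexDiff R u v) (h' : LexDiff R v w) : LexDiff R u w := by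
  induction h generalizing w with
  | rel hab =>
    cases h' with
    | rel hbc => exact rel (trans_of R hab hbc) _ _
    | cons => exact rel hab _ _
  | cons a _ ih =>
    cases h' with
    | rel hac => exact rel hac _ _
    | cons _ h' => exact cons a (ih h')

end LexDiff

theorem lexDiff_singleton {a b : α} : LexDiff R [a] [b] ↔ R a b := by
  refine ⟨?_, fun hab => .rel hab [] []⟩
  rintro (⟨hab, -, -⟩ | ⟨-, ⟨⟩⟩)
  exact hab

theorem lexDiff_iff_lex (hl : u.length = v.length) : LexDiff R u v ↔ List.Lex R u v := by
  constructor
  · intro h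
    induction h with
    | rel hab => exact .rel hab
    | cons _ _ ih => exact .cons (ih (by simpa using hl))
  · intro h
    induction h with
    | nil => simp at hl
    | rel hab => exact .rel hab _ _
    | cons _ ih => exact .cons _ (ih (by simpa using hl))

theorem lexDiff_iff_lt [LT α] (hl : u.length = v.length) : LexDiff (· < ·) u v ↔ u < v :=
  lexDiff_iff_lex hl

/-- `v` arises from `u` by replacing the last letter by one that covers it with respect to `R`:
the relation between `w` and `w⁺` and between `w⁻` and `w`, for an arbitrary order. -/
def LastCovBy (R : α → α → Prop) (u v : List α) : Prop :=
  ∃ w a b, u = w ++ [a] ∧ v = w ++ [b] ∧ R a b ∧ ∀ c, R a c → ¬ R c b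

namespace LastCovBy

theorem swap (h : LastCovBy R u v) : LastCovBy (Function.swap R) v u := by
  obtain ⟨w, a, b, rfl, rfl, hab, hcov⟩ := h
  exact ⟨w, b, a, rfl, rfl, hab, fun c hcb hac => hcov c hac hcb⟩

theorem length_eq (h : LastCovBy R u v) : u.length = v.length := by
  obtain ⟨w, a, b, rfl, rfl, -⟩ := h
  simp

theorem lexDiff (h : LastCovBy R u v) : LexDiff R u v := by
  obtain ⟨w, a, b, rfl, rfl, hab, -⟩ := h
  exact (lexDiff_singleton.mpr hab).append_left w

theorem append_left (h : LastCovBy R u v) (x : List α) : LastCovBy R (x ++ u) (x ++ v) := by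
  obtain ⟨w, a, b, rfl, rfl, hab⟩ := h
  exact ⟨x ++ w, a, b, by simp, by simp, hab⟩

theorem take_eq (h : LastCovBy R u v) {k : ℕ} (hk : k < u.length) : u.take k = v.take k := by
  obtain ⟨w, a, b, rfl, rfl, -⟩ := h
  have hkw : k ≤ w.length := by simpa [Nat.lt_succ_iff] using hk
  rw [List.take_append_of_le_length hkw, List.take_append_of_le_length hkw]

theorem drop (h : LastCovBy R u v) {k : ℕ} (hk : k < u.length) :
    LastCovBy R (u.drop k) (v.drop k) := by
  obtain ⟨w, a, b, rfl, rfl, hab⟩ := h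
  have hkw : k ≤ w.length := by simpa [Nat.lt_succ_iff] using hk
  exact ⟨w.drop k, a, b, List.drop_append_of_le_length hkw, List.drop_append_of_le_length hkw, hab⟩

theorem right_unique [Std.Trichotomous R] (hv : LastCovBy R u v) (hw : LastCovBy R u w) :
    v = w := by
  obtain ⟨x, a, b, rfl, rfl, hab, hb⟩ := hv
  obtain ⟨y, a', c, h, rfl, hac, hc⟩ := hw
  obtain ⟨rfl, ⟨⟩⟩ := List.append_inj' h rfl
  rcases trichotomous_of R b c with hbc | rfl | hcb
  exacts [absurd hbc (hc b hab), rfl, absurd hcb (hb c hac)]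

theorem eq_or_lexDiff [Std.Trichotomous R] (h : LastCovBy R v w) (hl : u.length = w.length)
    (huw : LexDiff R u w) : u = v ∨ LexDiff R u v := by
  obtain ⟨x, a, b, rfl, rfl, hab, hcov⟩ := h
  obtain ⟨u, c, rfl⟩ := (List.eq_nil_or_concat' u).resolve_left (by rintro rfl; simp at hl)
  rcases huw.or_of_append (by simpa using hl) with h | ⟨rfl, hcb⟩
  · exact .inr (h.append _ _)
  · rcases trichotomous_of R c a with hca | rfl | hac
    · exact .inr ((lexDiff_singleton.mpr hca).append_left u)
    · exact .inl rfl
    · exact absurd (lexDiff_singleton.mp hcb) (hcov c hac)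

end LastCovBy

end LexDiff

section LyndonFor

variable {α : Type*} {R : α → α → Prop} {v w : List α} {j k : ℕ}

/-- The Lyndon property for an arbitrary order `R` of the alphabet: `w` strictly precedes its
nontrivial rotations. For the reversed order `Function.swap R` it characterizes the largest
rotation of a primitive word. -/
def LyndonFor (R : α → α → Prop) (w : List α) : Prop :=
  ∀ i, 0 < i → i < w.length → LexDiff R w (w.rotate i)

theorem isLyndon_iff {w : List ℕ} : IsLyndon w ↔ w ≠ [] ∧ LyndonFor (· < ·) w :=
  and_congr_right fun _ => forall₃_congr fun _ _ _ =>
    (lexDiff_iff_lt (List.length_rotate ..).symm).symm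

namespace LyndonFor

theorem eq_or_lexDiff_of_isRotated (hw : LyndonFor R w) (h : w ~r v) :
    w = v ∨ LexDiff R w v := by
  obtain ⟨i, hi, rfl⟩ := List.isRotated_iff_mod.mp h
  rcases i.eq_zero_or_pos with rfl | hpos
  · exact .inl (List.rotate_zero w).symm
  rcases hi.eq_or_lt with rfl | hlt
  · exact .inl w.rotate_length.symm
  · exact .inr (hw i hpos hlt)

theorem take_eq_or_lexDiff_drop (hw : LyndonFor R w) (h : w ~r v) (hjk : j + k = w.length) :
    w.take j = v.drop k ∨ LexDiff R (w.take j) (v.drop k) := by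
  have hl : w.length = v.length := h.perm.length_eq
  have hjv : (w.take j).length = (v.drop k).length := by simp; omega
  have hrot : w.take j ++ w.drop j = v.drop k ++ v.take k ∨
      LexDiff R (w.take j ++ w.drop j) (v.drop k ++ v.take k) := by
    rw [List.take_append_drop, ← List.rotate_eq_drop_append_take (by omega)]
    exact hw.eq_or_lexDiff_of_isRotated (h.trans ⟨k, rfl⟩)
  rcases hrot with heq | hlt
  · exact .inl (List.append_inj heq hjv).1
  · exact (hlt.or_of_append hjv).symm.imp_left And.left

/- If `w` had a border `x`, say `w = xb = ax`, then `w < xa` and `w < bx` would give `b < a` and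
`a ≤ b`. -/
theorem take_lexDiff_drop [IsStrictOrder α R] (hw : LyndonFor R w) (hjk : j + k = w.length)
    (hj : 0 < j) (hk : 0 < k) : LexDiff R (w.take j) (w.drop k) := by
  have hrot : ∀ {j k}, j + k = w.length → 0 < j → 0 < k → LexDiff R (w.take j) (w.drop k) ∨
      w.take j = w.drop k ∧ LexDiff R (w.drop j) (w.take k) := by
    intro j k hjk hj hk
    refine LexDiff.or_of_append (by simp; omega) ?_
    rw [List.take_append_drop, ← List.rotate_eq_drop_append_take (by omega)]
    exact hw k hk (by omega)
  rcases hrot hjk hj hk with h | ⟨-, h⟩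
  · exact h
  rcases hrot (add_comm k j ▸ hjk) hk hj with h' | ⟨h', -⟩
  · exact absurd (h.trans h') (LexDiff.irrefl _)
  · exact absurd (h' ▸ h) (LexDiff.irrefl _)

theorem rel_of_cons_append [IsStrictOrder α R] {a b : α} {m : List α}
    (hw : LyndonFor R (a :: (m ++ [b]))) : R a b := by
  have h := hw.take_lexDiff_drop (j := 1) (k := m.length + 1) (by simp; omega) one_pos (by omega)
  exact lexDiff_singleton.mp (by simpa using h)

end LyndonFor

theorem isGreatest_maxCyc (w : List ℕ) : IsGreatest {v | w ~r v} (maxCyc w) := by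
  rcases eq_or_ne w [] with rfl | hw
  · exact ⟨.refl [], fun v hv => (List.isRotated_nil_iff'.mp hv).ge⟩
  obtain ⟨hmem, hle⟩ := List.max?_eq_some_iff.mp
    (List.max?_cons' (x := []) (xs := (List.range w.length).map w.rotate))
  change maxCyc w ∈ _ at hmem
  change ∀ v ∈ _, v ≤ maxCyc w at hle
  have hub : maxCyc w ∈ upperBounds {v | w ~r v} := by
    rintro v ⟨n, rfl⟩
    rw [← List.rotate_mod]
    refine hle _ (List.mem_cons_of_mem _ (List.mem_map_of_mem (List.mem_range.mpr ?_)))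
    exact Nat.mod_lt _ (List.length_pos_iff.mpr hw)
  refine ⟨?_, hub⟩
  rcases List.mem_cons.mp hmem with hnil | hrot
  · have hwnil : w ≤ [] := hnil ▸ hub (List.IsRotated.refl w)
    exact absurd (hwnil.lt_of_ne hw) (List.not_lt_nil w)
  · obtain ⟨n, -, h⟩ := List.mem_map.mp hrot
    exact ⟨n, h⟩

theorem LyndonFor.swap_maxCyc {w : List ℕ} (h : LyndonFor (· < ·) w) :
    LyndonFor (Function.swap (· < ·)) (maxCyc w) := by
  obtain ⟨⟨n, hn⟩, hmax⟩ := isGreatest_maxCyc w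
  intro i hi hlt
  rw [← hn] at hlt hmax ⊢
  rw [List.length_rotate] at hlt
  refine LexDiff.swap ((lexDiff_iff_lt (List.length_rotate ..)).mpr (lt_of_le_of_ne ?_ ?_))
  · exact hmax ⟨n + i, (List.rotate_rotate ..).symm⟩
  · rw [List.rotate_rotate, add_comm, ← List.rotate_rotate]
    intro hfix
    exact LexDiff.irrefl w (List.rotate_injective n hfix ▸ h i hi hlt)

theorem LyndonFor.maxCyc_eq {w m : List ℕ} (hm : LyndonFor (Function.swap (· < ·)) m)
    (h : w ~r m) : maxCyc w = m := by
  refine (isGreatest_maxCyc w).unique ⟨h, fun v hv => ?_⟩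
  rcases hm.eq_or_lexDiff_of_isRotated (h.symm.trans hv) with rfl | hlt
  · exact le_rfl
  · exact ((lexDiff_iff_lt (hv.symm.trans h).perm.length_eq).mp hlt.swap).le

end LyndonFor

section BlockMap

variable {α β : Type*} {B : α → α → List β} {A : Set α} {p : α} {u v : List α} {n : ℕ}

/-- The image of a word under the transducer that remembers the preceding letter: after `p`, the
letter `d` emits the block `B p d`. The first argument is the letter preceding the word. -/
def blockMap (B : α → α → List β) : α → List α → List β
  | _, [] => []
  | p, d :: u => B p d ++ blockMap B d u

/-- The image of a word read cyclically, so that its first letter is preceded by its last. -/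
def cyclicBlockMap (B : α → α → List β) : List α → List β
  | [] => []
  | d :: u => blockMap B (u.getLastD d) (d :: u)

theorem blockMap_append (B : α → α → List β) (p : α) (u v : List α) :
    blockMap B p (u ++ v) = blockMap B p u ++ blockMap B (u.getLastD p) v := by
  induction u generalizing p with
  | nil => rfl
  | cons d u ih =>
    rw [List.cons_append, blockMap, blockMap, ih, List.getLastD_cons, List.append_assoc]

theorem blockMap_concat (B : α → α → List β) (p : α) (u : List α) (d : α) :
    blockMap B p (u ++ [d]) = blockMap B p u ++ B (u.getLastD p) d := by
  rw [blockMap_append, blockMap, blockMap, List.append_nil]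

theorem cyclicBlockMap_concat (B : α → α → List β) (u : List α) (p : α) :
    cyclicBlockMap B (u ++ [p]) = blockMap B p (u ++ [p]) := by
  cases u with
  | nil => rfl
  | cons d u => rw [List.cons_append, cyclicBlockMap, List.getLastD_concat]

theorem length_blockMap (hB : ∀ p ∈ A, ∀ d ∈ A, (B p d).length = n) (hp : p ∈ A)
    (hu : ∀ d ∈ u, d ∈ A) : (blockMap B p u).length = n * u.length := by
  induction u generalizing p with
  | nil => rfl
  | cons d u ih =>
    obtain ⟨hd, hu⟩ := List.forall_mem_cons.mp hu
    rw [blockMap, List.length_append, hB p hp d hd, ih hd hu, List.length_cons, mul_add_one,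
      add_comm]

theorem length_cyclicBlockMap (hB : ∀ p ∈ A, ∀ d ∈ A, (B p d).length = n)
    (hu : ∀ d ∈ u, d ∈ A) : (cyclicBlockMap B u).length = n * u.length := by
  cases u with
  | nil => rfl
  | cons d u => exact length_blockMap hB (hu _ List.getLastD_mem_cons) hu

theorem cyclicBlockMap_rotate_one (B : α → α → List β) (d : α) (u : List α) :
    cyclicBlockMap B (u ++ [d]) =
      (cyclicBlockMap B (d :: u)).rotate (B (u.getLastD d) d).length := by
  rw [cyclicBlockMap_concat, blockMap_concat, cyclicBlockMap, blockMap,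
    List.rotate_append_length_eq]

theorem cyclicBlockMap_rotate (hB : ∀ p ∈ A, ∀ d ∈ A, (B p d).length = n)
    (hu : ∀ d ∈ u, d ∈ A) (q : ℕ) :
    cyclicBlockMap B (u.rotate q) = (cyclicBlockMap B u).rotate (n * q) := by
  induction q generalizing u with
  | zero => simp
  | succ q ih =>
    cases u with
    | nil => rfl
    | cons d u =>
      have hlen := hB _ (hu _ List.getLastD_mem_cons) _ (hu _ List.mem_cons_self)
      rw [List.rotate_cons_succ, ih (by simpa [or_comm, forall_and] using hu),
        cyclicBlockMap_rotate_one, hlen, List.rotate_rotate, mul_add_one, add_comm n]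

theorem LexDiff.blockMap {R : α → α → Prop} {S : β → β → Prop}
    (hB : ∀ p ∈ A, ∀ a ∈ A, ∀ b ∈ A, R a b → LexDiff S (B p a) (B p b)) (huv : LexDiff R u v)
    (hp : p ∈ A) (hu : ∀ d ∈ u, d ∈ A) (hv : ∀ d ∈ v, d ∈ A) :
    LexDiff S (blockMap B p u) (blockMap B p v) := by
  induction huv generalizing p with
  | rel hab u v =>
    exact (hB p hp _ (hu _ List.mem_cons_self) _ (hv _ List.mem_cons_self) hab).append _ _
  | cons a _ ih =>
    obtain ⟨ha, hu⟩ := List.forall_mem_cons.mp hu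
    exact (ih ha hu (List.forall_mem_cons.mp hv).2).append_left _

theorem blockMap_blockMap {C : α → α → List α} {D : α → α → List β}
    (hlast : ∀ p ∈ A, ∀ d ∈ A, (C p d).getLastD p = d)
    (hD : ∀ p ∈ A, ∀ d ∈ A, D p d = blockMap B p (C p d)) (hp : p ∈ A) (hu : ∀ d ∈ u, d ∈ A) :
    blockMap D p u = blockMap B p (blockMap C p u) := by
  induction u generalizing p with
  | nil => rfl
  | cons d u ih =>
    obtain ⟨hd, hu⟩ := List.forall_mem_cons.mp hu
    rw [blockMap, blockMap, blockMap_append, hlast p hp d hd, hD p hp d hd, ih hd hu]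

end BlockMap

section IsBlockSystem

variable {α β : Type*} {R : α → α → Prop} {S : β → β → Prop} {B : α → α → List β} {l h : α}

/-- The order-theoretic properties of the blocks of `Φ_s`: `B h h` is a smallest rotation, `B l l`
is a largest rotation of the same word, and passing from `B p l` to `B p h` raises the last letter.
Exchanging the letters `l` and `h` while reversing `R` and `S` preserves these properties, so that
smallest and largest rotations need not be treated separately. -/
structure IsBlockSystem (R : α → α → Prop) (S : β → β → Prop) (B : α → α → List β) (l h : α) :
    Prop where
  rel : R l h
  lyndonFor_high : LyndonFor S (B h h)
  lyndonFor_low : LyndonFor (Function.swap S) (B l l)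
  isRotated : B h h ~r B l l
  lastCovBy : ∀ p ∈ ({l, h} : Set α), LastCovBy S (B p l) (B p h)

theorem eq_and_eq_of_rel_of_mem_pair [IsStrictOrder α R] (hlh : R l h) {a b : α}
    (ha : a ∈ ({l, h} : Set α)) (hb : b ∈ ({l, h} : Set α)) (hab : R a b) : a = l ∧ b = h := by
  rcases ha with rfl | rfl <;> rcases hb with rfl | rfl
  · exact absurd hab (irrefl_of R _)
  · exact ⟨rfl, rfl⟩
  · exact absurd (trans_of R hab hlh) (irrefl_of R _)
  · exact absurd hab (irrefl_of R _)

theorem LyndonFor.exists_eq_cons_concat [IsStrictOrder α R] {w : List α} (hw : LyndonFor R w)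
    (hlh : R l h) (hwA : ∀ d ∈ w, d ∈ ({l, h} : Set α)) (hlen : 2 ≤ w.length) :
    ∃ m, w = l :: (m ++ [h]) := by
  obtain ⟨a, w, rfl⟩ := List.exists_cons_of_length_pos (by omega : 0 < w.length)
  obtain ⟨m, b, rfl⟩ := (List.eq_nil_or_concat' w).resolve_left (by rintro rfl; simp at hlen)
  obtain ⟨rfl, rfl⟩ := eq_and_eq_of_rel_of_mem_pair hlh (hwA a (by simp)) (hwA b (by simp))
    hw.rel_of_cons_append
  exact ⟨m, rfl⟩

namespace IsBlockSystem

theorem swap (hB : IsBlockSystem R S B l h) :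
    IsBlockSystem (Function.swap R) (Function.swap S) B h l where
  rel := hB.rel
  lyndonFor_high := hB.lyndonFor_low
  lyndonFor_low := hB.lyndonFor_high
  isRotated := hB.isRotated.symm
  lastCovBy p hp := (hB.lastCovBy p (Set.pair_comm l h ▸ hp)).swap

theorem length_eq (hB : IsBlockSystem R S B l h) :
    ∀ p ∈ ({l, h} : Set α), ∀ d ∈ ({l, h} : Set α), (B p d).length = (B h h).length := by
  have hrot := hB.isRotated.perm.length_eq
  have hhigh := (hB.lastCovBy h (by simp)).length_eq
  have hlow := (hB.lastCovBy l (by simp)).length_eq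
  rintro p (rfl | rfl) d (rfl | rfl) <;> omega

theorem lexDiff_of_rel [IsStrictOrder α R] (hB : IsBlockSystem R S B l h) :
    ∀ p ∈ ({l, h} : Set α), ∀ a ∈ ({l, h} : Set α), ∀ b ∈ ({l, h} : Set α), R a b →
      LexDiff S (B p a) (B p b) := by
  intro p hp a ha b hb hab
  obtain ⟨rfl, rfl⟩ := eq_and_eq_of_rel_of_mem_pair hB.rel ha hb hab
  exact (hB.lastCovBy p hp).lexDiff

theorem lastCovBy_blockMap (hB : IsBlockSystem R S B l h) {p : α} (hp : p ∈ ({l, h} : Set α))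
    {u : List α} (hu : ∀ d ∈ u, d ∈ ({l, h} : Set α)) :
    LastCovBy S (blockMap B p (u ++ [l])) (blockMap B p (u ++ [h])) := by
  have hlast : u.getLastD p ∈ ({l, h} : Set α) :=
    List.forall_mem_cons.mpr ⟨hp, hu⟩ _ List.getLastD_mem_cons
  rw [blockMap_concat, blockMap_concat]
  exact (hB.lastCovBy _ hlast).append_left _

theorem lexDiff_low [IsTrans β S] (hB : IsBlockSystem R S B l h) {d : α}
    (hd : d ∈ ({l, h} : Set α)) : LexDiff S (B h l) (B l d) := by
  have hhigh := (hB.lastCovBy h (by simp)).lexDiff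
  have hlow : LexDiff S (B h l) (B l l) := by
    rcases hB.lyndonFor_high.eq_or_lexDiff_of_isRotated hB.isRotated with heq | hlt
    exacts [heq ▸ hhigh, hhigh.trans hlt]
  rcases hd with rfl | rfl
  exacts [hlow, hlow.trans (hB.lastCovBy _ (by simp)).lexDiff]

section Straddle

variable {p d e : α} {j k : ℕ}

theorem take_lexDiff_drop_high [IsStrictOrder β S] (hB : IsBlockSystem R S B l h)
    (hp : p ∈ ({l, h} : Set α)) (hjk : j + k = (B h h).length) (hj : 0 < j) (hk : 0 < k) :
    LexDiff S ((B h l).take j) ((B p h).drop k) := by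
  have hhl := hB.length_eq h (by simp) l (by simp)
  rw [(hB.lastCovBy h (by simp)).take_eq (by omega)]
  rcases hp with rfl | rfl
  · have hll := hB.length_eq p (by simp) p (by simp)
    have hlt := ((hB.lastCovBy p (by simp)).drop (k := k) (by omega)).lexDiff
    rcases hB.lyndonFor_high.take_eq_or_lexDiff_drop hB.isRotated hjk with heq | hle
    exacts [heq ▸ hlt, hle.trans hlt]
  · exact hB.lyndonFor_high.take_lexDiff_drop hjk hj hk

theorem take_eq_or_lexDiff_drop_low [IsStrictTotalOrder β S] (hB : IsBlockSystem R S B l h)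
    (hp : p ∈ ({l, h} : Set α)) (hjk : j + k = (B h h).length) (hj : 0 < j) (hk : 0 < k) :
    (B h l).take j = (B p l).drop k ∨ LexDiff S ((B h l).take j) ((B p l).drop k) := by
  have hhl := hB.length_eq h (by simp) l (by simp)
  rcases hp with rfl | rfl
  · rw [(hB.lastCovBy h (by simp)).take_eq (by omega)]
    exact hB.lyndonFor_high.take_eq_or_lexDiff_drop hB.isRotated hjk
  · have hcov := (hB.lastCovBy p (by simp)).drop (k := k) (by omega)
    exact hcov.eq_or_lexDiff (by simp; omega)
      (hB.take_lexDiff_drop_high (by simp) hjk hj hk)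

theorem drop_lexDiff_take_low [IsTrans β S] (hB : IsBlockSystem R S B l h)
    (he : e ∈ ({l, h} : Set α)) (hjk : j + k = (B h h).length) (hj : 0 < j) (hk : 0 < k) :
    LexDiff S ((B h l).drop j) ((B l e).take k) := by
  have hhl := hB.length_eq h (by simp) l (by simp)
  have hll := hB.length_eq l (by simp) l (by simp)
  have htake : (B l e).take k = (B l l).take k := by
    rcases he with rfl | rfl
    exacts [rfl, ((hB.lastCovBy l (by simp)).take_eq (by omega)).symm]
  have hlt := ((hB.lastCovBy h (by simp)).drop (k := j) (by omega)).lexDiff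
  rw [htake]
  rcases hB.lyndonFor_low.take_eq_or_lexDiff_drop (j := k) (k := j) hB.isRotated.symm (by omega)
    with heq | hle
  exacts [heq ▸ hlt, hlt.trans hle.swap]

theorem lexDiff_straddle [IsStrictTotalOrder β S] (hB : IsBlockSystem R S B l h)
    (hp : p ∈ ({l, h} : Set α)) (hd : d ∈ ({l, h} : Set α)) (he : e ∈ ({l, h} : Set α))
    (hk : 0 < k) (hkn : k < (B h h).length) :
    LexDiff S (B h l) ((B p d).drop k ++ (B d e).take k) := by
  obtain ⟨j, hjk⟩ : ∃ j, j + k = (B h h).length := ⟨_, Nat.sub_add_cancel hkn.le⟩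
  have hj : 0 < j := by omega
  rw [← List.take_append_drop j (B h l)]
  rcases hd with rfl | rfl
  · have hlt := hB.drop_lexDiff_take_low he hjk hj hk
    rcases hB.take_eq_or_lexDiff_drop_low hp hjk hj hk with heq | hle
    exacts [heq ▸ hlt.append_left _, hle.append _ _]
  · exact (hB.take_lexDiff_drop_high hp hjk hj hk).append _ _

end Straddle

theorem lexDiff_rotate_cyclicBlockMap [IsStrictTotalOrder β S] (hB : IsBlockSystem R S B l h)
    {u : List α} (hu : ∀ d ∈ u, d ∈ ({l, h} : Set α)) (hlen : 2 ≤ u.length) {k : ℕ} (hk : 0 < k)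
    (hkn : k < (B h h).length) : LexDiff S (B h l) ((cyclicBlockMap B u).rotate k) := by
  obtain ⟨d, e, u, rfl⟩ : ∃ d e v, u = d :: e :: v := by
    match u, hlen with
    | d :: e :: v, _ => exact ⟨d, e, v, rfl⟩
  set p := (e :: u).getLastD d with hp
  have hpA : p ∈ ({l, h} : Set α) := hu _ List.getLastD_mem_cons
  have hd := hu d (by simp)
  have he := hu e (by simp)
  have hkp : k ≤ (B p d).length := by rw [hB.length_eq p hpA d hd]; exact hkn.le
  rw [cyclicBlockMap, ← hp, blockMap, blockMap,
    List.rotate_eq_drop_append_take (by rw [List.length_append]; omega),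
    List.drop_append_of_le_length hkp, List.take_append_of_le_length hkp,
    ← List.take_append_drop k (B d e)]
  simpa only [List.append_nil, List.append_assoc] using
    (hB.lexDiff_straddle hpA hd he hk hkn).append []
      ((B d e).drop k ++ blockMap B e u ++ (B p d).take k)

theorem lexDiff_cyclicBlockMap_rotate [IsStrictOrder α R] [IsTrans β S]
    (hB : IsBlockSystem R S B l h) {w : List α}
    (hw : LyndonFor R w) (hwA : ∀ d ∈ w, d ∈ ({l, h} : Set α)) {q : ℕ} (hq : 0 < q)
    (hqw : q < w.length) :
    LexDiff S (cyclicBlockMap B w) (cyclicBlockMap B (w.rotate q)) := by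
  obtain ⟨m, rfl⟩ := hw.exists_eq_cons_concat hB.rel hwA (by omega)
  have hlt := hw q hq hqw
  have hrotA : ∀ d ∈ (l :: (m ++ [h])).rotate q, d ∈ ({l, h} : Set α) := fun d hd =>
    hwA d (List.mem_rotate.mp hd)
  rw [← List.cons_append, cyclicBlockMap_concat]
  generalize hv : (l :: (m ++ [h])).rotate q = v at hlt hrotA
  rw [List.cons_append, hv]
  obtain ⟨v, p, rfl⟩ := (List.eq_nil_or_concat' v).resolve_left (by rintro rfl; simp at hv)
  rw [cyclicBlockMap_concat]
  rcases hrotA p (by simp) with rfl | rfl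
  · cases v with
    | nil => exact (hB.lexDiff_low (by simp)).append _ _
    | cons d v => exact (hB.lexDiff_low (hrotA d (by simp))).append _ _
  · exact hlt.blockMap hB.lexDiff_of_rel (by simp) hwA hrotA

theorem lyndonFor_cyclicBlockMap [IsStrictOrder α R] [IsStrictTotalOrder β S]
    (hB : IsBlockSystem R S B l h) {w : List α} (hw : LyndonFor R w)
    (hwA : ∀ d ∈ w, d ∈ ({l, h} : Set α)) (hlen : 2 ≤ w.length) :
    LyndonFor S (cyclicBlockMap B w) := by
  intro i hi hin
  rw [length_cyclicBlockMap hB.length_eq hwA] at hin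
  set n := (B h h).length
  have hpos : 0 < n := Nat.pos_of_mul_pos_right (hi.trans hin)
  have hq : i / n < w.length := Nat.div_lt_of_lt_mul hin
  have hrotA : ∀ d ∈ w.rotate (i / n), d ∈ ({l, h} : Set α) := fun d hd =>
    hwA d (List.mem_rotate.mp hd)
  rw [← Nat.div_add_mod i n, ← List.rotate_rotate, ← cyclicBlockMap_rotate hB.length_eq hwA]
  rcases (i % n).eq_zero_or_pos with hk | hk
  · rw [hk, List.rotate_zero]
    have hni : n ≤ i := Nat.le_of_dvd hi (Nat.dvd_of_mod_eq_zero hk)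
    exact hB.lexDiff_cyclicBlockMap_rotate hw hwA (Nat.div_pos hni hpos) hq
  · have hlt := hB.lexDiff_rotate_cyclicBlockMap hrotA (by simpa using hlen) hk
      (Nat.mod_lt i hpos)
    obtain ⟨m, rfl⟩ := hw.exists_eq_cons_concat hB.rel hwA hlen
    rw [cyclicBlockMap, List.getLastD_concat, blockMap]
    simpa only [List.append_nil] using hlt.append (blockMap B l (m ++ [h])) []

end IsBlockSystem

end IsBlockSystem

section Subst

variable {s r t u : List ℕ} {p d : ℕ}

theorem phiAux_eq_blockMap (s : List ℕ) (p : ℕ) (u : List ℕ) :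
    phiAux s p u = blockMap (phiBlock s) p u := by
  induction u generalizing p with
  | nil => rfl
  | cons d u ih => rw [phiAux, blockMap, ih]

theorem subst_cons (s : List ℕ) (d : ℕ) (u : List ℕ) :
    subst s (d :: u) = blockMap (phiBlock s) (1 - d) (d :: u) := by
  rw [subst, phiAux_eq_blockMap, blockMap]

theorem subst_eq_cyclicBlockMap (s : List ℕ) (d : ℕ) (u : List ℕ) :
    subst s (d :: (u ++ [1 - d])) = cyclicBlockMap (phiBlock s) (d :: (u ++ [1 - d])) := by
  rw [subst_cons, cyclicBlockMap, List.getLastD_concat]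

theorem wplus_concat (u : List ℕ) (a : ℕ) : wplus (u ++ [a]) = u ++ [a + 1] := by
  simp [wplus, List.getLast!_eq_getLast?_getD]

theorem wminus_concat (u : List ℕ) (a : ℕ) : wminus (u ++ [a]) = u ++ [a - 1] := by
  simp [wminus, List.getLast!_eq_getLast?_getD]

theorem lastCovBy_wplus (hu : u ≠ []) : LastCovBy (· < ·) u (wplus u) := by
  obtain ⟨u, a, rfl⟩ := (List.eq_nil_or_concat' u).resolve_left hu
  exact ⟨u, a, a + 1, rfl, wplus_concat u a, by omega, by omega⟩

theorem lastCovBy_wminus (hs : s ∈ LyndonExt) : LastCovBy (· < ·) (wminus s) s := by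
  obtain ⟨hlyn, hzero⟩ := hs
  obtain ⟨hne, hlyn⟩ := isLyndon_iff.mp hlyn
  obtain ⟨u, b, rfl⟩ := (List.eq_nil_or_concat' s).resolve_left hne
  have hb : 0 < b := by
    cases u with
    | nil => exact Nat.pos_of_ne_zero fun hb => hzero (by rw [hb, List.nil_append])
    | cons a u => exact hlyn.rel_of_cons_append.pos
  exact ⟨u, b - 1, b, wminus_concat u b, rfl, by omega, by omega⟩

theorem isBlockSystem_phiBlock (hs : s ∈ LyndonExt) :
    IsBlockSystem (· < ·) (· < ·) (phiBlock s) 0 1 := by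
  obtain ⟨hne, hlyn⟩ := isLyndon_iff.mp hs.1
  have hrot : s ~r maxCyc s := (isGreatest_maxCyc s).1
  refine ⟨one_pos, hlyn, hlyn.swap_maxCyc, hrot, ?_⟩
  rintro p (rfl | rfl)
  · exact lastCovBy_wplus fun h => hne (List.isRotated_nil_iff.mp (h ▸ hrot))
  · exact lastCovBy_wminus hs

theorem mem_lyndonBin_iff :
    r ∈ LyndonBin ↔ LyndonFor (· < ·) r ∧ 2 ≤ r.length ∧ ∀ d ∈ r, d ∈ ({0, 1} : Set ℕ) := by
  have hletter : ∀ d : ℕ, d ≤ 1 ↔ d ∈ ({0, 1} : Set ℕ) := fun d => Nat.le_one_iff_eq_zero_or_eq_one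
  simp only [LyndonBin, Set.mem_ofPred_eq, isLyndon_iff, hletter]
  refine ⟨fun ⟨h, hr⟩ => ⟨h.2, hr⟩, fun ⟨h, hr⟩ => ⟨⟨?_, h⟩, hr⟩⟩
  exact List.ne_nil_of_length_pos (by omega)

theorem exists_eq_of_mem_lyndonBin (hr : r ∈ LyndonBin) :
    ∃ u, r = 0 :: (u ++ [1]) ∧ ∀ d ∈ u, d ∈ ({0, 1} : Set ℕ) := by
  obtain ⟨hlyn, hlen, hletter⟩ := mem_lyndonBin_iff.mp hr
  obtain ⟨u, rfl⟩ := hlyn.exists_eq_cons_concat one_pos hletter hlen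
  exact ⟨u, rfl, fun d hd => hletter d (by simp [hd])⟩

theorem swap_maxCyc_of_mem_lyndonBin (hr : r ∈ LyndonBin) :
    LyndonFor (Function.swap (· < ·)) (maxCyc r) ∧ 2 ≤ (maxCyc r).length ∧
      ∀ d ∈ maxCyc r, d ∈ ({1, 0} : Set ℕ) := by
  obtain ⟨hlyn, hlen, hletter⟩ := mem_lyndonBin_iff.mp hr
  have hrot : r ~r maxCyc r := (isGreatest_maxCyc r).1
  exact ⟨hlyn.swap_maxCyc, hrot.perm.length_eq ▸ hlen,
    fun d hd => Set.pair_comm 0 1 ▸ hletter d (hrot.mem_iff.mpr hd)⟩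

theorem exists_maxCyc_eq_of_mem_lyndonBin (hr : r ∈ LyndonBin) :
    ∃ u, maxCyc r = 1 :: (u ++ [0]) ∧ ∀ d ∈ u, d ∈ ({0, 1} : Set ℕ) := by
  obtain ⟨hlyn, hlen, hletter⟩ := swap_maxCyc_of_mem_lyndonBin hr
  obtain ⟨u, hu⟩ := hlyn.exists_eq_cons_concat one_pos hletter hlen
  exact ⟨u, hu, fun d hd => Set.pair_comm 0 1 ▸ hletter d (by simp [hu, hd])⟩

theorem subst_eq_of_mem_lyndonBin (s : List ℕ) (hr : r ∈ LyndonBin) :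
    subst s r = cyclicBlockMap (phiBlock s) r := by
  obtain ⟨u, rfl, -⟩ := exists_eq_of_mem_lyndonBin hr
  exact subst_eq_cyclicBlockMap s 0 u

theorem subst_maxCyc_eq_of_mem_lyndonBin (s : List ℕ) (hr : r ∈ LyndonBin) :
    subst s (maxCyc r) = cyclicBlockMap (phiBlock s) (maxCyc r) := by
  obtain ⟨u, hu, -⟩ := exists_maxCyc_eq_of_mem_lyndonBin hr
  rw [hu]
  exact subst_eq_cyclicBlockMap s 1 u

theorem two_le_length_subst (hs : s ∈ LyndonExt) (hr : r ∈ LyndonBin) :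
    2 ≤ (subst s r).length := by
  obtain ⟨-, hlen, hletter⟩ := mem_lyndonBin_iff.mp hr
  rw [subst_eq_of_mem_lyndonBin s hr,
    length_cyclicBlockMap (isBlockSystem_phiBlock hs).length_eq hletter]
  exact hlen.trans (Nat.le_mul_of_pos_left _ (List.length_pos_iff.mpr hs.1.1))

theorem subst_mem_lyndonExt (hs : s ∈ LyndonExt) (hr : r ∈ LyndonBin) :
    subst s r ∈ LyndonExt := by
  have hlen := two_le_length_subst hs hr
  obtain ⟨hlyn, hlenr, hletter⟩ := mem_lyndonBin_iff.mp hr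
  refine ⟨isLyndon_iff.mpr ⟨List.ne_nil_of_length_pos (by omega), ?_⟩, fun h => ?_⟩
  · rw [subst_eq_of_mem_lyndonBin s hr]
    exact (isBlockSystem_phiBlock hs).lyndonFor_cyclicBlockMap hlyn hletter hlenr
  · simp [h] at hlen

theorem maxCyc_subst (hs : s ∈ LyndonExt) (hr : r ∈ LyndonBin) :
    maxCyc (subst s r) = subst s (maxCyc r) := by
  have hB := isBlockSystem_phiBlock hs
  obtain ⟨q, hq⟩ := (isGreatest_maxCyc r).1
  refine LyndonFor.maxCyc_eq ?_ ?_
  · obtain ⟨hlyn, hlen, hletter⟩ := swap_maxCyc_of_mem_lyndonBin hr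
    rw [subst_maxCyc_eq_of_mem_lyndonBin s hr]
    exact hB.swap.lyndonFor_cyclicBlockMap hlyn hletter hlen
  · rw [subst_maxCyc_eq_of_mem_lyndonBin s hr, subst_eq_of_mem_lyndonBin s hr, ← hq,
      cyclicBlockMap_rotate hB.length_eq (mem_lyndonBin_iff.mp hr).2.2]
    exact ⟨_, rfl⟩

theorem exists_phiBlock_eq_concat (hr : r ∈ LyndonBin) (hp : p ∈ ({0, 1} : Set ℕ)) :
    ∃ u, (∀ d ∈ u, d ∈ ({0, 1} : Set ℕ)) ∧
      ∀ d ∈ ({0, 1} : Set ℕ), phiBlock r p d = u ++ [d] := by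
  rcases hp with rfl | rfl
  · obtain ⟨u, hu, hletter⟩ := exists_maxCyc_eq_of_mem_lyndonBin hr
    refine ⟨1 :: u, by simpa using hletter, ?_⟩
    rintro d (rfl | rfl)
    · exact hu
    · exact (congrArg wplus hu).trans (wplus_concat (1 :: u) 0)
  · obtain ⟨u, rfl, hletter⟩ := exists_eq_of_mem_lyndonBin hr
    refine ⟨0 :: u, by simpa using hletter, ?_⟩
    rintro d (rfl | rfl)
    · exact wminus_concat (0 :: u) 1
    · rfl

theorem exists_phiBlock_eq_cons (hr : r ∈ LyndonBin) (hd : d ∈ ({0, 1} : Set ℕ)) :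
    ∃ u, phiBlock r (1 - d) d = d :: u := by
  rcases hd with rfl | rfl
  · obtain ⟨u, rfl, -⟩ := exists_eq_of_mem_lyndonBin hr
    refine ⟨u ++ [0], ?_⟩
    exact wminus_concat (0 :: u) 1
  · obtain ⟨u, hu, -⟩ := exists_maxCyc_eq_of_mem_lyndonBin hr
    refine ⟨u ++ [1], ?_⟩
    exact (congrArg wplus hu).trans (wplus_concat (1 :: u) 0)

theorem phiBlock_subst (hs : s ∈ LyndonExt) (hr : r ∈ LyndonBin) (hp : p ∈ ({0, 1} : Set ℕ))
    (hd : d ∈ ({0, 1} : Set ℕ)) :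
    phiBlock (subst s r) p d = blockMap (phiBlock s) p (phiBlock r p d) := by
  have hcov := (isBlockSystem_phiBlock (subst_mem_lyndonExt hs hr)).lastCovBy p hp
  have hcov' : LastCovBy (· < ·) (blockMap (phiBlock s) p (phiBlock r p 0))
      (blockMap (phiBlock s) p (phiBlock r p 1)) := by
    obtain ⟨u, hletter, hu⟩ := exists_phiBlock_eq_concat hr hp
    rw [hu 0 (by simp), hu 1 (by simp)]
    exact (isBlockSystem_phiBlock hs).lastCovBy_blockMap hp hletter
  rcases hp with rfl | rfl
  · have hlow : phiBlock (subst s r) 0 0 = blockMap (phiBlock s) 0 (phiBlock r 0 0) := by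
      obtain ⟨u, hu, -⟩ := exists_maxCyc_eq_of_mem_lyndonBin hr
      change maxCyc (subst s r) = blockMap (phiBlock s) 0 (maxCyc r)
      rw [maxCyc_subst hs hr, hu, subst_cons]
    rcases hd with rfl | rfl
    exacts [hlow, hcov.right_unique (hlow ▸ hcov')]
  · have hhigh : phiBlock (subst s r) 1 1 = blockMap (phiBlock s) 1 (phiBlock r 1 1) := by
      obtain ⟨u, rfl, -⟩ := exists_eq_of_mem_lyndonBin hr
      exact subst_cons s 0 (u ++ [1])
    rcases hd with rfl | rfl
    exacts [hcov.swap.right_unique (hhigh ▸ hcov'.swap), hhigh]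

theorem subst_assoc (hs : s ∈ LyndonExt) (hr : r ∈ LyndonBin)
    (ht : ∀ d ∈ t, d ∈ ({0, 1} : Set ℕ)) : subst (subst s r) t = subst s (subst r t) := by
  have hlast : ∀ p ∈ ({0, 1} : Set ℕ), ∀ d ∈ ({0, 1} : Set ℕ), (phiBlock r p d).getLastD p = d := by
    intro p hp d hd
    obtain ⟨u, -, hu⟩ := exists_phiBlock_eq_concat hr hp
    rw [hu d hd, List.getLastD_concat]
  cases t with
  | nil => rfl
  | cons d t =>
    have hd : d ∈ ({0, 1} : Set ℕ) := ht d List.mem_cons_self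
    have hprev : 1 - d ∈ ({0, 1} : Set ℕ) := by rcases hd with rfl | rfl <;> simp
    obtain ⟨u, hu⟩ := exists_phiBlock_eq_cons hr hd
    have hfirst : subst r (d :: t) = d :: (u ++ blockMap (phiBlock r) d t) := by
      rw [subst_cons, blockMap, hu, List.cons_append]
    rw [subst_cons, blockMap_blockMap hlast (fun p hp d hd => phiBlock_subst hs hr hp hd) hprev ht,
      ← subst_cons, hfirst, subst_cons]

end Subst

theorem subst_lyndon_and_assoc_general (s : List ℕ) (hs : s ∈ LyndonExt) :
    (∀ r ∈ LyndonBin, subst s r ∈ LyndonExt ∧ maxCyc (subst s r) = subst s (maxCyc r)) ∧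
    (∀ r ∈ LyndonBin, ∀ t : List ℕ, (∀ d ∈ t, d ≤ 1) →
      subst (subst s r) t = subst s (subst r t)) :=
  ⟨fun _ hr => ⟨subst_mem_lyndonExt hs hr, maxCyc_subst hs hr⟩,
    fun _ hr _ ht => subst_assoc hs hr fun d hd => Nat.le_one_iff_eq_zero_or_eq_one.mp (ht d hd)⟩

/-- For `s ∈ L_e`: (i) for any `r ∈ L`, the word `s • r` belongs to
`L_e` and `L(s • r) = s • L(r)`; (ii) for any `r, t ∈ L`, `(s • r) • t = s • (r • t)`. -/
theorem subst_lyndon_and_assoc (s : List ℕ) (hs : s ∈ LyndonExt) :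
    (∀ r ∈ LyndonBin, subst s r ∈ LyndonExt ∧ maxCyc (subst s r) = subst s (maxCyc r)) ∧
    (∀ r ∈ LyndonBin, ∀ t ∈ LyndonBin, subst (subst s r) t = subst s (subst r t)) :=
  (subst_lyndon_and_assoc_general s hs).imp_right fun h r hr t ht => h r hr t ht.2.2
end

section
/- (i) The Farey intervals J^s, s ∈ F_e, are pairwise disjoint. (ii) For each S ∈ Λ_e, the intervals J^{S•r}, r ∈ F, are pairwise disjoint subintervals of J^S. (iii) The basic intervals I^S, S ∈ Λ_e, are pairwise disjoint. -/
open Set Filter MeasureTheory Topology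

/-!
Consecutive words of a Farey level are the Christoffel words of two Farey neighbours, and their
concatenation is the Christoffel word of the mediant.  If `S` is the Christoffel word of slope `α`,
then `S^∞` and `L(S)^∞` are the lower and upper mechanical sequences of slope `α`, and `L(S)⁺ S^∞`
is the lower one with its first term incremented.  The partial sums of these sequences are `⌊nα⌋`,
`⌈nα⌉` and `⌊nα⌋ + 1`, so for `α < γ` the incremented sequence of slope `α` and all its shifts are
lexicographically at most the upper sequence of slope `γ`.  This forces the bases in which the two
sequences expand `1` to be ordered in the same way, that is `β_r < β_ℓ` for the two words: this is
(i).

The substitution `Φ_S` respects the lexicographic order of shifts, and `Φ_{S•r} = Φ_S ∘ Φ_r`, so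
the same comparison separates the intervals `J^{S•r}`.  The endpoints of `I^S` and `J^S` come from
the sequences `0 0^∞`, `0 1 0^∞` and `0 1^∞`, and `1 0^∞` and `1^∞` are the incremented sequence of
slope `0` and the upper sequence of slope `1`.  Hence `J^{S•r}` lies in `J^S` and to the right of
`I^S`, which gives (ii), and (iii) by removing the common prefix of two factorisations.
-/

namespace FareyIntervals

/-! ### Sequences and the lexicographic order -/

section Sequences

variable {α : Type*}

/-- The sequence `x` without its first `n` terms. -/
def shift (n : ℕ) (x : ℕ → α) : ℕ → α := fun i => x (i + n)

/-- The sequence `a, x 0, x 1, …`. -/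
def cons (a : α) (x : ℕ → α) : ℕ → α
  | 0 => a
  | i + 1 => x i

lemma shift_zero (x : ℕ → α) : shift 0 x = x := rfl

lemma shift_shift (a b : ℕ) (x : ℕ → α) : shift a (shift b x) = shift (a + b) x := by
  funext i
  simp only [shift, add_assoc]

lemma shift_one_cons (a : α) (x : ℕ → α) : shift 1 (cons a x) = x := rfl

lemma cons_shift_one (x : ℕ → α) : cons (x 0) (shift 1 x) = x := by
  funext i
  cases i <;> rfl

lemma cons_eq_shift {x : ℕ → α} {q : ℕ} (hx : Function.Periodic x (q + 1)) :
    cons (x q) x = shift q x := by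
  funext i
  cases i with
  | zero => simp only [cons, shift, zero_add]
  | succ i => rw [cons, ← hx i, shift, add_right_comm, add_assoc]

lemma periodic_shift {x : ℕ → α} {m : ℕ} (hx : Function.Periodic x m) (n : ℕ) :
    Function.Periodic (shift n x) m := fun i => by
  rw [shift, add_right_comm]
  exact hx _

lemma shift_mul_of_periodic {x : ℕ → α} {m : ℕ} (hx : Function.Periodic x m) (k : ℕ) :
    shift (k * m) x = x := funext fun i => hx.nat_mul k i

section LinearOrder

variable [LinearOrder α] {x y z : ℕ → α}

lemma toLex_lt_iff : toLex x < toLex y ↔ ∃ n, (∀ i < n, x i = y i) ∧ x n < y n := Iff.rfl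

lemma toLex_le_iff : toLex x ≤ toLex y ↔ ∀ n, (∀ i < n, x i = y i) → x n ≤ y n := by
  rw [← not_lt]
  change (¬∃ n, (∀ i < n, y i = x i) ∧ y n < x n) ↔ _
  push Not
  simp only [eq_comm]

lemma head_le_of_toLex_le (h : toLex x ≤ toLex y) : x 0 ≤ y 0 :=
  toLex_le_iff.1 h 0 fun _ hi => absurd hi (Nat.not_lt_zero _)

lemma toLex_shift_le {n : ℕ} (h : toLex x ≤ toLex y) (hxy : ∀ i < n, x i = y i) :
    toLex (shift n x) ≤ toLex (shift n y) := by
  refine toLex_le_iff.2 fun k hk => toLex_le_iff.1 h (k + n) fun i hi => ?_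
  rcases lt_or_ge i n with hin | hin
  · exact hxy i hin
  · simpa only [shift, Nat.sub_add_cancel hin] using hk (i - n) (by omega)

lemma cons_lt_cons {a : α} (h : toLex x < toLex y) : toLex (cons a x) < toLex (cons a y) := by
  obtain ⟨n, heq, hlt⟩ := h
  refine ⟨n + 1, fun i hi => ?_, hlt⟩
  cases i with
  | zero => rfl
  | succ i => exact heq i (by omega)

/-- The first `m` letters of `x` are lexicographically at most the first `m` letters of `y`. -/
def PrefixLE (m : ℕ) (x y : ℕ → α) : Prop := ∀ k < m, (∀ i < k, x i = y i) → x k ≤ y k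

lemma PrefixLE.of_toLex_le (h : toLex x ≤ toLex y) (m : ℕ) : PrefixLE m x y :=
  fun k _ => toLex_le_iff.1 h k

lemma PrefixLE.append {m n : ℕ} (h : PrefixLE m x y)
    (h' : (∀ i < m, x i = y i) → PrefixLE n (shift m x) (shift m y)) :
    PrefixLE (m + n) x y := by
  intro k hk heq
  rcases lt_or_ge k m with hkm | hkm
  · exact h k hkm heq
  · have := h' (fun i hi => heq i (hi.trans_le hkm)) (k - m) (by omega) fun i hi =>
      heq (i + m) (by omega)
    simpa only [shift, Nat.sub_add_cancel hkm] using this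

lemma PrefixLE.congr {m : ℕ} {x' y' : ℕ → α} (h : PrefixLE m x y) (hx : ∀ i < m, x' i = x i)
    (hy : ∀ i < m, y' i = y i) : PrefixLE m x' y' := by
  intro k hk heq
  rw [hx k hk, hy k hk]
  refine h k hk fun i hi => ?_
  rw [← hx i (hi.trans hk), ← hy i (hi.trans hk), heq i hi]

lemma toLex_lt_of_prefixLE {n : ℕ} (h : PrefixLE (n + 1) x y) (hyz : ∀ i < n, y i = z i)
    (hlt : y n < z n) : toLex x < toLex z := by
  by_cases hxy : ∀ i < n, x i = y i
  · exact ⟨n, fun i hi => (hxy i hi).trans (hyz i hi), (h n n.lt_succ_self hxy).trans_lt hlt⟩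
  · classical
    push Not at hxy
    obtain ⟨hkn, hk⟩ := Nat.find_spec hxy
    have hmin : ∀ i < Nat.find hxy, x i = y i := fun i hi => by
      by_contra hne
      exact Nat.find_min hxy hi ⟨hi.trans hkn, hne⟩
    refine ⟨Nat.find hxy, fun i hi => (hmin i hi).trans (hyz i (hi.trans hkn)), ?_⟩
    exact (lt_of_le_of_ne (h _ (hkn.trans n.lt_succ_self) hmin) hk).trans_eq (hyz _ hkn)

end LinearOrder

lemma toLex_le_of_sum_le {x y : ℕ → ℤ}
    (h : ∀ n, ∑ i ∈ Finset.range n, x i ≤ ∑ i ∈ Finset.range n, y i) : toLex x ≤ toLex y := by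
  refine toLex_le_iff.2 fun n heq => ?_
  have hsum := h (n + 1)
  rw [Finset.sum_range_succ, Finset.sum_range_succ,
    Finset.sum_congr rfl fun i hi => heq i (Finset.mem_range.1 hi)] at hsum
  exact le_of_add_le_add_left hsum

end Sequences

/-! ### Expansions of `1` in real bases -/

noncomputable section Expansions

/-- The value `Σ x_i β^{-(i+1)}` of an integer digit sequence; the sequences manipulated below take
negative values too, so that reflection `x ↦ -x` is available. -/
def value (β : ℝ) (x : ℕ → ℤ) : ℝ := ∑' i : ℕ, (x i : ℝ) / β ^ (i + 1)

/-- `x` is a β-expansion of `1`. -/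
def IsBase (x : ℕ → ℤ) (β : ℝ) : Prop := 1 < β ∧ value β x = 1

/-- The base in which `x` is an expansion of `1`; junk if there is none. -/
def baseOf (x : ℕ → ℤ) : ℝ := Classical.epsilon (IsBase x)

/-- Bounded sequences of nonnegative digits. -/
structure IsDigitSeq (x : ℕ → ℤ) : Prop where
  nonneg : ∀ i, 0 ≤ x i
  bddAbove : BddAbove (range x)

/-- Digit sequences with positive first digit and infinitely many positive digits: exactly these
are expansions of `1` with infinitely many terms in some base. -/
structure IsInfiniteExpansion (x : ℕ → ℤ) : Prop extends IsDigitSeq x where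
  head_pos : 0 < x 0
  exists_pos : ∀ n, ∃ i, 0 < shift n x i

variable {β γ : ℝ} {x y : ℕ → ℤ}

lemma IsDigitSeq.tail (h : IsDigitSeq x) (n : ℕ) : IsDigitSeq (shift n x) :=
  ⟨fun _ => h.nonneg _, h.bddAbove.mono (range_comp_subset_range (· + n) x)⟩

lemma hasSum_const_div_pow (hβ : 1 < β) (B : ℝ) :
    HasSum (fun i : ℕ => B / β ^ (i + 1)) (B / (β - 1)) := by
  have hβ0 : β ≠ 0 := by positivity
  have hβ1 : β - 1 ≠ 0 := sub_ne_zero.2 hβ.ne'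
  have hterm : (fun i : ℕ => B / β ^ (i + 1)) = fun i => B / β * β⁻¹ ^ i := by
    funext i
    rw [inv_pow, pow_succ]
    field_simp
  have hsum : B / (β - 1) = B / β * (1 - β⁻¹)⁻¹ := by
    field_simp
  rw [hterm, hsum]
  exact (hasSum_geometric_of_lt_one (by positivity) (inv_lt_one_of_one_lt₀ hβ)).mul_left _

lemma IsDigitSeq.term_nonneg (h : IsDigitSeq x) (hβ : 1 < β) (i : ℕ) :
    0 ≤ (x i : ℝ) / β ^ (i + 1) := by
  have : (0 : ℝ) ≤ x i := mod_cast h.nonneg i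
  positivity

lemma IsDigitSeq.summable (h : IsDigitSeq x) (hβ : 1 < β) :
    Summable fun i : ℕ => (x i : ℝ) / β ^ (i + 1) := by
  obtain ⟨B, hB⟩ := h.bddAbove
  refine .of_nonneg_of_le (h.term_nonneg hβ) (fun i => ?_) (hasSum_const_div_pow hβ B).summable
  gcongr
  exact mod_cast hB (mem_range_self i)

lemma IsDigitSeq.value_nonneg (h : IsDigitSeq x) (hβ : 1 < β) : 0 ≤ value β x :=
  tsum_nonneg (h.term_nonneg hβ)

lemma IsDigitSeq.value_pos (h : IsDigitSeq x) (hβ : 1 < β) {i : ℕ} (hi : 0 < x i) :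
    0 < value β x := by
  refine (h.summable hβ).tsum_pos (h.term_nonneg hβ) i ?_
  have : (0 : ℝ) < x i := mod_cast hi
  positivity

lemma IsDigitSeq.value_le (h : IsDigitSeq x) (hβ : 1 < β) {B : ℤ} (hB : ∀ i, x i ≤ B) :
    value β x ≤ B / (β - 1) := by
  refine (h.summable hβ).tsum_le_of_sum_range_le fun n => ?_
  refine le_trans (Finset.sum_le_sum fun i _ => ?_) (sum_le_hasSum (Finset.range n)
    (fun i _ => ?_) (hasSum_const_div_pow hβ (B : ℝ)))
  · gcongr
    exact mod_cast hB i
  · have : (0 : ℝ) ≤ B := mod_cast (h.nonneg 0).trans (hB 0)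
    positivity

lemma IsDigitSeq.value_eq_sum_add (h : IsDigitSeq x) (hβ : 1 < β) (n : ℕ) :
    value β x = ∑ i ∈ Finset.range n, (x i : ℝ) / β ^ (i + 1)
      + value β (shift n x) / β ^ n := by
  rw [value, ← (h.summable hβ).sum_add_tsum_nat_add n, value, ← tsum_div_const]
  congr 1
  refine tsum_congr fun i => ?_
  rw [div_div, ← pow_add, shift, add_right_comm]

lemma IsDigitSeq.value_anti (h : IsDigitSeq x) (hβ : 1 < β) (hβγ : β ≤ γ) :
    value γ x ≤ value β x := by
  refine (h.summable (hβ.trans_le hβγ)).tsum_le_tsum (fun i => ?_) (h.summable hβ)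
  have : (0 : ℝ) ≤ x i := mod_cast h.nonneg i
  gcongr

lemma value_sub_value_le (hx : IsDigitSeq x) (hy : IsDigitSeq y) (hβ : 1 < β) {n : ℕ}
    (heq : ∀ i < n, x i = y i) (hlt : x n < y n) :
    value β x - value β y ≤
      (value β (shift (n + 1) x) - value β (shift (n + 1) y) - 1) / β ^ (n + 1) := by
  rw [hx.value_eq_sum_add hβ (n + 1), hy.value_eq_sum_add hβ (n + 1), Finset.sum_range_succ,
    Finset.sum_range_succ, Finset.sum_congr rfl fun i hi => by rw [heq i (Finset.mem_range.1 hi)]]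
  have hdigit : (x n : ℝ) + 1 ≤ y n := mod_cast hlt
  have hterm : (x n : ℝ) / β ^ (n + 1) + 1 / β ^ (n + 1) ≤ y n / β ^ (n + 1) := by
    rw [← add_div]
    gcongr
  rw [sub_div, sub_div]
  linarith

lemma value_le_one (hx : IsDigitSeq x) (hy : IsDigitSeq y) (hγ : IsBase y γ)
    (hxy : ∀ n, toLex (shift n x) ≤ toLex y) : value γ x ≤ 1 := by
  obtain ⟨hγ1, hyval⟩ := hγ
  have hbdd : BddAbove (range fun n => value γ (shift n x)) := by
    obtain ⟨B, hB⟩ := hx.bddAbove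
    exact ⟨B / (γ - 1), forall_mem_range.2 fun n =>
      (hx.tail n).value_le hγ1 fun i => hB (mem_range_self (i + n))⟩
  set M := ⨆ n, value γ (shift n x)
  have hle : ∀ n, value γ (shift n x) ≤ M := le_ciSup hbdd
  suffices M ≤ 1 from (hle 0).trans this
  by_contra! hM1
  -- comparing a tail of `x` with `y` at their first difference contracts the excess over `1`
  have hcontract : ∀ n, value γ (shift n x) ≤ 1 + (M - 1) / γ := by
    intro n
    rcases (hxy n).eq_or_lt with heq | ⟨k, hk, hlt⟩
    · rw [toLex_inj.1 heq, hyval, le_add_iff_nonneg_right]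
      exact div_nonneg (sub_nonneg.2 hM1.le) (by positivity)
    · have hdiff := value_sub_value_le (hx.tail n) hy hγ1 hk hlt
      rw [hyval, shift_shift] at hdiff
      have htail : value γ (shift (k + 1 + n) x) - value γ (shift (k + 1) y) - 1 ≤ M - 1 := by
        linarith [hle (k + 1 + n), (hy.tail (k + 1)).value_nonneg hγ1]
      have hpow : γ ≤ γ ^ (k + 1) := le_self_pow₀ hγ1.le k.succ_ne_zero
      have : (value γ (shift (k + 1 + n) x) - value γ (shift (k + 1) y) - 1) / γ ^ (k + 1)
          ≤ (M - 1) / γ :=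
        div_le_div₀ (sub_nonneg.2 hM1.le) htail (by positivity) hpow
      linarith
  have hsup : M ≤ 1 + (M - 1) / γ := ciSup_le hcontract
  have : (M - 1) / γ < M - 1 := div_lt_self (sub_pos.2 hM1) hγ1
  linarith

lemma IsBase.lt (hx : IsDigitSeq x) (hy : IsInfiniteExpansion y) (hβ : IsBase x β)
    (hγ : IsBase y γ) (hxy : ∀ n, toLex (shift n x) ≤ toLex y) (hlt : toLex x < toLex y) :
    β < γ := by
  by_contra! hγβ
  obtain ⟨n, heq, hn⟩ := hlt
  have hanti : 1 ≤ value γ x := hβ.2.symm.trans_le (hx.value_anti hγ.1 hγβ)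
  have hxtail : value γ (shift (n + 1) x) ≤ 1 :=
    value_le_one (hx.tail _) hy.toIsDigitSeq hγ fun k => by
      rw [shift_shift]
      exact hxy _
  obtain ⟨i, hi⟩ := hy.exists_pos (n + 1)
  have hytail : 0 < value γ (shift (n + 1) y) := (hy.tail (n + 1)).value_pos hγ.1 hi
  have hdiff := value_sub_value_le hx hy.toIsDigitSeq hγ.1 heq hn
  have hγ0 : 0 < γ := one_pos.trans hγ.1
  have : (value γ (shift (n + 1) x) - value γ (shift (n + 1) y) - 1) / γ ^ (n + 1) < 0 :=
    div_neg_of_neg_of_pos (by linarith) (by positivity)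
  rw [hγ.2] at hdiff
  linarith

lemma IsDigitSeq.continuousOn_value (h : IsDigitSeq x) :
    ContinuousOn (fun β => value β x) (Ioi 1) := by
  obtain ⟨B, hB⟩ := h.bddAbove
  refine continuousOn_of_forall_continuousAt fun β (hβ : 1 < β) => ?_
  obtain ⟨a, ha1, haβ⟩ := exists_between hβ
  refine ContinuousOn.continuousAt (s := Ici a) ?_ (Ici_mem_nhds haβ)
  refine continuousOn_tsum (u := fun i => B / a ^ (i + 1)) (fun i => ?_)
    (hasSum_const_div_pow ha1 B).summable fun i γ (hγ : a ≤ γ) => ?_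
  · exact continuousOn_const.div (continuousOn_id.pow _) fun γ (hγ : a ≤ γ) =>
      pow_ne_zero _ (one_pos.trans (ha1.trans_le hγ)).ne'
  · rw [Real.norm_of_nonneg (h.term_nonneg (ha1.trans_le hγ) i)]
    have hxB : (x i : ℝ) ≤ B := mod_cast hB (mem_range_self i)
    have hB0 : (0 : ℝ) ≤ B := le_trans (mod_cast h.nonneg i) hxB
    gcongr

lemma IsInfiniteExpansion.exists_one_lt_value (h : IsInfiniteExpansion x) :
    ∃ a : ℝ, 1 < a ∧ 1 < value a x := by
  obtain ⟨j, hj⟩ := h.exists_pos 1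
  have hcont : ContinuousAt (fun a : ℝ => 1 / a ^ (0 + 1) + 1 / a ^ (j + 1 + 1)) 1 := by
    refine .add ?_ ?_ <;> exact continuousAt_const.div (continuousAt_id.pow _) (by simp)
  have hev : ∀ᶠ a in 𝓝[>] (1 : ℝ), 1 < 1 / a ^ (0 + 1) + 1 / a ^ (j + 1 + 1) :=
    (hcont.tendsto.mono_left nhdsWithin_le_nhds).eventually_const_lt (by norm_num)
  obtain ⟨a, hlt, ha : 1 < a⟩ := (hev.and self_mem_nhdsWithin).exists
  refine ⟨a, ha, hlt.trans_le ?_⟩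
  have hsum := (h.summable ha).sum_le_tsum {0, j + 1} fun i _ => h.term_nonneg ha i
  rw [Finset.sum_pair (by omega)] at hsum
  refine le_trans (add_le_add ?_ ?_) hsum
  · gcongr
    exact mod_cast h.head_pos
  · gcongr
    exact mod_cast hj

lemma IsInfiniteExpansion.isBase_baseOf (h : IsInfiniteExpansion x) : IsBase x (baseOf x) := by
  refine Classical.epsilon_spec (p := IsBase x) ?_
  obtain ⟨B, hB⟩ := h.bddAbove
  obtain ⟨a, ha, hax⟩ := h.exists_one_lt_value
  have hB0 : (0 : ℝ) < B := mod_cast h.head_pos.trans_le (hB (mem_range_self 0))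
  set b : ℝ := a + B
  have hb : 1 < b := by linarith
  have hbx : value b x ≤ 1 := by
    refine (h.value_le hb fun i => hB (mem_range_self i)).trans ?_
    rw [div_le_one (by linarith)]
    linarith
  have hcont : ContinuousOn (fun β => value β x) (Icc a b) :=
    h.continuousOn_value.mono fun β hβ => ha.trans_le hβ.1
  obtain ⟨β, hβ, hval⟩ := intermediate_value_Icc' (by linarith) hcont ⟨hbx, hax.le⟩
  exact ⟨β, ha.trans_le hβ.1, hval⟩

lemma baseOf_lt_baseOf (hx : IsInfiniteExpansion x) (hy : IsInfiniteExpansion y)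
    (hxy : ∀ n, toLex (shift n x) ≤ toLex y) (hlt : toLex x < toLex y) :
    baseOf x < baseOf y :=
  hx.isBase_baseOf.lt hx.toIsDigitSeq hy hy.isBase_baseOf hxy hlt

end Expansions

/-! ### Extremal pairs and their substitution -/

section BinarySequences

/-- Sequences with all terms in `{0, 1}`. -/
def Binary (c : ℕ → ℤ) : Prop := ∀ i, c i = 0 ∨ c i = 1

variable {c : ℕ → ℤ}

lemma Binary.tail (hc : Binary c) (n : ℕ) : Binary (shift n c) := fun _ => hc _

lemma binary_cons {a : ℤ} : Binary (cons a c) ↔ (a = 0 ∨ a = 1) ∧ Binary c :=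
  ⟨fun h => ⟨h 0, fun i => h (i + 1)⟩, fun h i => by cases i; exacts [h.1, h.2 _]⟩

lemma binary_zero : Binary 0 := fun _ => .inl rfl

lemma binary_one : Binary 1 := fun _ => .inr rfl

lemma Binary.one_sub (hc : Binary c) : Binary (1 - c) := fun i => by
  rcases hc i with h | h <;> simp [h]

lemma Binary.zero_le (hc : Binary c) : toLex 0 ≤ toLex c :=
  Pi.toLex_monotone fun i => by rcases hc i with h | h <;> simp [h]

end BinarySequences

/-- `s` is periodic with least period `m`, and `s` and `l` are the lexicographically least and
greatest elements of its shift orbit. -/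
structure ExtremalPair (m : ℕ) (s l : ℕ → ℤ) : Prop where
  pos : 0 < m
  periodic : Function.Periodic s m
  dvd_of_shift_eq : ∀ j, shift j s = s → m ∣ j
  exists_shift_eq : ∃ t, l = shift t s
  left_le : ∀ j, toLex s ≤ toLex (shift j s)
  le_right : ∀ j, toLex (shift j s) ≤ toLex l

/-- The substitution of a pair `(s, l)` of `m`-periodic sequences, applied to a sequence `c` of
states: a transition from state `0` emits the block `l`, one from state `1` emits the block `s`, and
the last letter of the block is changed by the difference of the two states.  If `S` is a Lyndon
word with `S^∞ = s` then `Φ_S(c 1 c 2 …)` is obtained with `c 0 = 1 - c 1`. -/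
def blockSubst (m : ℕ) (s l c : ℕ → ℤ) : ℕ → ℤ :=
  fun i => (if c (i / m) = 0 then l i else s i) + (c ((i + 1) / m) - c (i / m))

section BlockSubst

variable {m : ℕ} {s l b c : ℕ → ℤ}

lemma neg_blockSubst (hc : Binary c) :
    -blockSubst m s l c = blockSubst m (-l) (-s) (1 - c) := by
  funext i
  simp only [blockSubst, Pi.neg_apply, Pi.sub_apply, Pi.one_apply]
  rcases hc (i / m) with h | h <;>
    simp only [h, reduceIte, one_ne_zero, sub_zero, sub_self] <;> ring

lemma blockSubst_of_lt {i : ℕ} (hi : i + 1 < m) :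
    blockSubst m s l c i = if c 0 = 0 then l i else s i := by
  simp only [blockSubst, Nat.div_eq_of_lt hi, Nat.div_eq_of_lt (Nat.lt_of_succ_lt hi), sub_self,
    add_zero]

lemma blockSubst_last (n : ℕ) :
    blockSubst (n + 1) s l c n = (if c 0 = 0 then l n else s n) + (c 1 - c 0) := by
  simp only [blockSubst, Nat.div_eq_of_lt n.lt_succ_self, Nat.div_self n.succ_pos]

lemma blockSubst_lt_blockSubst (hm : 0 < m) (h0 : c 0 = b 0) (h : toLex c < toLex b) :
    toLex (blockSubst m s l c) < toLex (blockSubst m s l b) := by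
  obtain ⟨N, heq, hlt⟩ := toLex_lt_iff.1 h
  obtain ⟨N, rfl⟩ := Nat.exists_eq_succ_of_ne_zero (n := N) fun hN =>
    (hN ▸ hlt : c 0 < b 0).ne h0
  have hpos : 0 < (N + 1) * m := Nat.mul_pos N.succ_pos hm
  have hdiv : ∀ i < (N + 1) * m, c (i / m) = b (i / m) := fun i hi =>
    heq _ ((Nat.div_lt_iff_lt_mul hm).2 hi)
  refine toLex_lt_iff.2 ⟨(N + 1) * m - 1, fun i hi => ?_, ?_⟩
  · simp only [blockSubst, hdiv i (by omega), hdiv (i + 1) (by omega)]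
  · simp only [blockSubst, hdiv _ (Nat.sub_lt hpos one_pos), Nat.sub_add_cancel hpos,
      Nat.mul_div_cancel _ hm]
    gcongr

end BlockSubst

namespace ExtremalPair

variable {m : ℕ} {s l : ℕ → ℤ}

lemma exists_shift_right_eq (h : ExtremalPair m s l) : ∃ t, s = shift t l := by
  obtain ⟨t, rfl⟩ := h.exists_shift_eq
  refine ⟨t * (m - 1), ?_⟩
  rw [shift_shift, ← Nat.mul_succ, Nat.succ_eq_add_one, Nat.sub_add_cancel h.pos,
    shift_mul_of_periodic h.periodic]

lemma periodic_right (h : ExtremalPair m s l) : Function.Periodic l m := by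
  obtain ⟨t, rfl⟩ := h.exists_shift_eq
  exact periodic_shift h.periodic t

lemma left_le_shift_right (h : ExtremalPair m s l) (j : ℕ) : toLex s ≤ toLex (shift j l) := by
  obtain ⟨t, rfl⟩ := h.exists_shift_eq
  rw [shift_shift]
  exact h.left_le _

lemma shift_right_le (h : ExtremalPair m s l) (j : ℕ) : toLex (shift j l) ≤ toLex l := by
  obtain ⟨t, ht⟩ := h.exists_shift_eq
  conv_lhs => rw [ht, shift_shift]
  exact h.le_right _

lemma dvd_of_shift_right_eq (h : ExtremalPair m s l) {j : ℕ} (hj : shift j l = l) : m ∣ j := by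
  obtain ⟨t, ht⟩ := h.exists_shift_right_eq
  refine h.dvd_of_shift_eq j ?_
  rw [ht, shift_shift, add_comm, ← shift_shift, hj]

protected lemma neg (h : ExtremalPair m s l) : ExtremalPair m (-l) (-s) where
  pos := h.pos
  periodic i := congrArg Neg.neg (h.periodic_right i)
  dvd_of_shift_eq _ hj := h.dvd_of_shift_right_eq (neg_injective hj)
  exists_shift_eq := h.exists_shift_right_eq.imp fun _ ht => congrArg Neg.neg ht
  left_le j := neg_le_neg (h.shift_right_le j)
  le_right j := neg_le_neg (h.left_le_shift_right j)

lemma shift_blockSubst (h : ExtremalPair m s l) (k : ℕ) (c : ℕ → ℤ) :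
    shift (k * m) (blockSubst m s l c) = blockSubst m s l (shift k c) := by
  funext i
  have hs : s (i + k * m) = s i := h.periodic.nat_mul k i
  have hl : l (i + k * m) = l i := h.periodic_right.nat_mul k i
  simp only [shift, blockSubst, add_right_comm i _ 1, Nat.add_mul_div_right _ _ h.pos, hs, hl]
  rfl

lemma shift_period_blockSubst (h : ExtremalPair m s l) (c : ℕ → ℤ) :
    shift m (blockSubst m s l c) = blockSubst m s l (shift 1 c) := by
  simpa only [one_mul] using h.shift_blockSubst 1 c

lemma shift_eq_shift_mod (h : ExtremalPair m s l) (n : ℕ) (c : ℕ → ℤ) :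
    shift n (blockSubst m s l c) = shift (n % m) (blockSubst m s l (shift (n / m) c)) := by
  rw [← h.shift_blockSubst, shift_shift, Nat.mod_add_div']

lemma exists_shift_right_lt (h : ExtremalPair m s l) {j : ℕ} (hj : 0 < j) (hjm : j < m) :
    ∃ n < m - j, (∀ i < n, shift j l i = l i) ∧ shift j l n < l n := by
  have hne : ∀ i, 0 < i → i < m → shift i l ≠ l := fun i hi him heq =>
    Nat.not_dvd_of_pos_of_lt hi him (h.dvd_of_shift_right_eq heq)
  obtain ⟨n, heq, hlt⟩ := (h.shift_right_le j).lt_of_ne fun heq => hne j hj hjm (toLex_inj.1 heq)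
  refine ⟨n, ?_, heq, hlt⟩
  by_contra! hn
  -- otherwise `l` starts with its last `m - j` letters, and its shift by `m - j` exceeds it
  have hwrap := toLex_shift_le (h.shift_right_le j) fun i hi => heq i (hi.trans_le hn)
  rw [shift_shift, Nat.sub_add_cancel hjm.le,
    (funext h.periodic_right : shift m l = l)] at hwrap
  exact hne (m - j) (by omega) (by omega) (toLex_inj.1 ((h.shift_right_le _).antisymm hwrap))

end ExtremalPair

lemma PrefixLE.lower_last {n : ℕ} {x x' y : ℕ → ℤ} (h : PrefixLE (n + 1) x y)
    (heq : ∀ i < n, x' i = x i) (hle : x' n ≤ x n) :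
    PrefixLE (n + 1) x' y ∧ ((∀ i < n + 1, x' i = y i) → x' n = x n) := by
  have hn : (∀ i < n, x' i = y i) → x n ≤ y n := fun hpre =>
    h n n.lt_succ_self fun i hi => (heq i hi).symm.trans (hpre i hi)
  refine ⟨fun k hk hpre => ?_, fun hpre => hle.antisymm ?_⟩
  · rcases (Nat.lt_succ_iff.1 hk).lt_or_eq with hkn | rfl
    · rw [heq k hkn]
      exact h k hk fun i hi => (heq i (hi.trans hkn)).symm.trans (hpre i hi)
    · exact hle.trans (hn hpre)
  · exact (hn fun i hi => hpre i (hi.trans n.lt_succ_self)).trans_eq (hpre n n.lt_succ_self).symm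

namespace ExtremalPair

variable {m : ℕ} {s l c x y : ℕ → ℤ}

lemma prefixLE_shift_right_add_single {n j : ℕ} (h : ExtremalPair (n + 1 + j) s l) (hj : 0 < j) :
    PrefixLE (n + 1) (shift j l + Pi.single n 1) l := by
  obtain ⟨N, hN, heq, hlt⟩ := h.exists_shift_right_lt hj (by omega)
  intro k hk hpre
  rcases lt_trichotomy k N with hkN | rfl | hkN
  · rw [Pi.add_apply, Pi.single_eq_of_ne (by omega), add_zero, heq k hkN]
  · have hsingle : (Pi.single n 1 : ℕ → ℤ) k ≤ 1 := by
      rw [Pi.single_apply]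
      split_ifs <;> simp
    rw [Pi.add_apply]
    omega
  · have hdrop := hpre N hkN
    rw [Pi.add_apply, Pi.single_eq_of_ne (by omega), add_zero] at hdrop
    exact absurd hdrop hlt.ne

lemma prefixLE_first_block {n j : ℕ} (h : ExtremalPair (n + 1 + j) s l) (hc : Binary c)
    (hj : c 0 = 1 ∨ 0 < j) :
    PrefixLE (n + 1) (shift j (blockSubst (n + 1 + j) s l c)) l ∧
      ((∀ i < n + 1, shift j (blockSubst (n + 1 + j) s l c) i = l i) → c 1 = 1) := by
  have hinit : ∀ i < n, shift j (blockSubst (n + 1 + j) s l c) i =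
      if c 0 = 0 then l (i + j) else s (i + j) := fun i hi => blockSubst_of_lt (by omega)
  have hlast : shift j (blockSubst (n + 1 + j) s l c) n =
      (if c 0 = 0 then l (n + j) else s (n + j)) + (c 1 - c 0) := by
    rw [shift, add_right_comm]
    exact blockSubst_last (n + j)
  have hc1 : c 1 ≤ 1 := by rcases hc 1 with h1 | h1 <;> omega
  generalize shift j (blockSubst (n + 1 + j) s l c) = z at hinit hlast ⊢
  rcases hc 0 with h0 | h1
  · simp only [h0, if_true, sub_zero] at hinit hlast
    have hraise : (shift j l + Pi.single n 1 : ℕ → ℤ) n = l (n + j) + 1 := by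
      rw [Pi.add_apply, Pi.single_eq_same, shift]
    refine ((h.prefixLE_shift_right_add_single (by omega)).lower_last (x' := z) (fun i hi => ?_)
      (by omega)).imp_right fun hlower hpre => by linarith [hlower hpre]
    rw [hinit i hi, Pi.add_apply, Pi.single_eq_of_ne hi.ne, add_zero, shift]
  · simp only [h1, one_ne_zero, if_false] at hinit hlast
    have hshift : shift j s n = s (n + j) := rfl
    exact ((PrefixLE.of_toLex_le (h.le_right j) (n + 1)).lower_last (x' := z) hinit
      (by omega)).imp_right fun hlower hpre => by linarith [hlower hpre]

lemma prefixLE_shift_blockSubst (h : ExtremalPair m s l) (hc : Binary c) {j : ℕ} (hjm : j < m)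
    (hj : c 0 = 1 ∨ 0 < j) : PrefixLE m (shift j (blockSubst m s l c)) l := by
  obtain ⟨n, rfl⟩ : ∃ n, m = n + 1 + j := ⟨m - j - 1, by omega⟩
  obtain ⟨hfst, hc1⟩ := h.prefixLE_first_block hc hj
  refine hfst.append fun hpre => ?_
  rw [shift_shift, h.shift_period_blockSubst]
  refine (PrefixLE.of_toLex_le (h.left_le_shift_right (n + 1)) j).congr (fun i hi => ?_)
    fun _ _ => rfl
  rw [blockSubst_of_lt (by omega), if_neg]
  simp only [shift, zero_add, hc1 hpre, one_ne_zero, not_false_eq_true]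

lemma shift_blockSubst_lt (h : ExtremalPair m s l) (hc : Binary c) (hy : y 0 = 1)
    (hcy : ∀ k, toLex (shift (k + 1) c) ≤ toLex y) (n : ℕ) :
    (∃ k, n = k * m ∧ shift k c = cons 0 y) ∨
      toLex (shift n (blockSubst m s l c)) < toLex (blockSubst m s l (cons 0 y)) := by
  rw [h.shift_eq_shift_mod]
  by_cases hj : shift (n / m) c 0 = 1 ∨ 0 < n % m
  · right
    obtain ⟨p, rfl⟩ : ∃ p, m = p + 1 := ⟨m - 1, (Nat.sub_add_cancel h.pos).symm⟩
    refine toLex_lt_of_prefixLE (h.prefixLE_shift_blockSubst (hc.tail _) (Nat.mod_lt _ h.pos) hj)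
      (fun i hi => ?_) ?_
    · rw [blockSubst_of_lt (by omega), cons, if_pos rfl]
    · rw [blockSubst_last, cons, cons, if_pos rfl, hy]
      omega
  · push Not at hj
    have hmod : n % m = 0 := Nat.eq_zero_of_le_zero hj.2
    have h0 : shift (n / m) c 0 = 0 := (hc.tail _ 0).resolve_right hj.1
    have hc' : cons 0 (shift (n / m + 1) c) = shift (n / m) c := by
      rw [← h0, add_comm, ← shift_shift, cons_shift_one]
    rw [hmod, shift_zero]
    rcases (hcy (n / m)).eq_or_lt with heq | hlt
    · exact .inl ⟨n / m, (Nat.div_mul_cancel (Nat.dvd_of_mod_eq_zero hmod)).symm,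
        by rw [← hc', toLex_inj.1 heq]⟩
    · refine .inr (blockSubst_lt_blockSubst h.pos h0 ?_)
      rw [← hc']
      exact cons_lt_cons hlt

lemma shift_blockSubst_le (h : ExtremalPair m s l) (hc : Binary c) (hy : y 0 = 1)
    (hcy : ∀ k, toLex (shift (k + 1) c) ≤ toLex y) (n : ℕ) :
    toLex (shift n (blockSubst m s l c)) ≤ toLex (blockSubst m s l (cons 0 y)) := by
  rcases h.shift_blockSubst_lt hc hy hcy n with ⟨k, rfl, hk⟩ | hlt
  · rw [h.shift_blockSubst, hk]
  · exact hlt.le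

lemma le_shift_blockSubst (h : ExtremalPair m s l) (hc : Binary c) (hxb : Binary x) (hx : x 0 = 0)
    (hxc : ∀ k, toLex x ≤ toLex (shift (k + 1) c)) (n : ℕ) :
    toLex (blockSubst m s l (cons 1 x)) ≤ toLex (shift n (blockSubst m s l c)) := by
  have hcons : 1 - cons 1 x = cons 0 (1 - x) := by
    funext i
    cases i <;> rfl
  have hle := h.neg.shift_blockSubst_le hc.one_sub (y := 1 - x) (by simp [hx])
    (fun k => sub_le_sub_left (hxc k) (toLex 1)) n
  rw [← hcons, ← neg_blockSubst hc, ← neg_blockSubst (binary_cons.2 ⟨.inr rfl, hxb⟩)] at hle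
  exact neg_le_neg_iff.1 hle

end ExtremalPair

/-- Extremal pairs `(s, l)` of the form `(S^∞, L(S)^∞)` for a word `S` of length `m` with nonzero
last letter, so that `S⁻` is a word over `ℕ` as well. -/
structure AdmissiblePair (m : ℕ) (s l : ℕ → ℤ) : Prop extends ExtremalPair m s l where
  nonneg : ∀ i, 0 ≤ s i
  last_pos : 0 < s (m - 1)

/-- Extremal pairs `(r^∞, L(r)^∞)` of a word `r` over `{0, 1}` of length `q` such that `r` starts
with `0` and ends with `1` while `L(r)` starts with `1` and ends with `0`. -/
structure BinaryPair (q : ℕ) (x y : ℕ → ℤ) : Prop extends ExtremalPair q x y where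
  binary_left : Binary x
  head_left : x 0 = 0
  last_left : x (q - 1) = 1
  head_right : y 0 = 1
  last_right : y (q - 1) = 0

namespace BinaryPair

variable {q : ℕ} {x y : ℕ → ℤ}

lemma binary_right (h : BinaryPair q x y) : Binary y := by
  obtain ⟨t, rfl⟩ := h.exists_shift_eq
  exact h.binary_left.tail t

lemma binary_one_cons (h : BinaryPair q x y) : Binary (cons 1 x) :=
  binary_cons.2 ⟨.inr rfl, h.binary_left⟩

lemma binary_zero_cons (h : BinaryPair q x y) : Binary (cons 0 y) :=
  binary_cons.2 ⟨.inl rfl, h.binary_right⟩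

lemma one_cons_eq_shift (h : BinaryPair q x y) : cons 1 x = shift (q - 1) x := by
  obtain ⟨p, rfl⟩ : ∃ p, q = p + 1 := ⟨q - 1, (Nat.sub_add_cancel h.pos).symm⟩
  rw [← h.last_left, Nat.add_sub_cancel, cons_eq_shift h.periodic]

lemma zero_cons_eq_shift (h : BinaryPair q x y) : cons 0 y = shift (q - 1) y := by
  obtain ⟨p, rfl⟩ : ∃ p, q = p + 1 := ⟨q - 1, (Nat.sub_add_cancel h.pos).symm⟩
  rw [← h.last_right, Nat.add_sub_cancel, cons_eq_shift h.periodic_right]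

lemma periodic_one_cons (h : BinaryPair q x y) : Function.Periodic (cons 1 x) q :=
  h.one_cons_eq_shift ▸ periodic_shift h.periodic _

lemma periodic_zero_cons (h : BinaryPair q x y) : Function.Periodic (cons 0 y) q :=
  h.zero_cons_eq_shift ▸ periodic_shift h.periodic_right _

lemma exists_shift_one_cons_eq (h : BinaryPair q x y) : ∃ t, cons 0 y = shift t (cons 1 x) := by
  obtain ⟨t, ht⟩ := h.exists_shift_eq
  refine ⟨t, ?_⟩
  rw [h.zero_cons_eq_shift, h.one_cons_eq_shift, ht, shift_shift, shift_shift, add_comm]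

lemma cons_blockSubst (h : BinaryPair q x y) {c : ℕ → ℤ} (hc : Binary c) (k : ℕ) :
    cons (c 0) (blockSubst q x y c) k = if c (k / q) = 0 then cons 0 y k else cons 1 x k := by
  have hmul : ∀ p, cons 0 y (p * q) = 0 ∧ cons 1 x (p * q) = 1 := fun p =>
    ⟨h.periodic_zero_cons.nat_mul_eq p, h.periodic_one_cons.nat_mul_eq p⟩
  cases k with
  | zero => rcases hc 0 with h0 | h0 <;> simp [cons, h0]
  | succ k =>
    by_cases hk : q ∣ k + 1
    · obtain ⟨p, hp⟩ := hk
      obtain ⟨hy, hx⟩ := hmul p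
      rw [mul_comm, ← hp] at hx hy
      change y k = 0 at hy
      change x k = 1 at hx
      have hval : blockSubst q x y c k = c ((k + 1) / q) := by
        rcases hc (k / q) with h0 | h0 <;> simp [blockSubst, h0, hx, hy]
      rw [cons, hval]
      rcases hc ((k + 1) / q) with h1 | h1 <;> simp [h1, cons, hx, hy]
    · simp only [cons, blockSubst, Nat.succ_div_of_not_dvd hk, sub_self, add_zero]

end BinaryPair

section Composition

variable {m q : ℕ} {s l x y : ℕ → ℤ}

lemma ExtremalPair.comp (h : ExtremalPair m s l) (hr : BinaryPair q x y) :
    ExtremalPair (m * q) (blockSubst m s l (cons 1 x)) (blockSubst m s l (cons 0 y)) := by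
  obtain ⟨t, ht⟩ := hr.exists_shift_one_cons_eq
  have hright : blockSubst m s l (cons 0 y) = shift (t * m) (blockSubst m s l (cons 1 x)) := by
    rw [h.shift_blockSubst, ht]
  refine ⟨Nat.mul_pos h.pos hr.pos, fun i => ?_, fun j hj => ?_, ⟨_, hright⟩,
    h.le_shift_blockSubst hr.binary_one_cons hr.binary_left hr.head_left hr.left_le,
    h.shift_blockSubst_le hr.binary_one_cons hr.head_right hr.le_right⟩
  · have := congrFun (h.shift_blockSubst q (cons 1 x)) i
    rwa [(funext hr.periodic_one_cons : shift q (cons 1 x) = _), mul_comm] at this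
  · have hj' : shift j (blockSubst m s l (cons 0 y)) = blockSubst m s l (cons 0 y) := by
      rw [hright, shift_shift, add_comm, ← shift_shift, hj]
    rcases h.shift_blockSubst_lt hr.binary_zero_cons hr.head_right hr.shift_right_le j with
      ⟨k, rfl, hk⟩ | hlt
    · have hky : shift k y = y := by
        rw [← shift_one_cons 0 y, shift_shift, add_comm, ← shift_shift, hk]
      rw [mul_comm]
      exact mul_dvd_mul_right (hr.dvd_of_shift_right_eq hky) m
    · exact absurd (congrArg toLex hj') hlt.ne

lemma blockSubst_comp (hr : BinaryPair q x y) {c : ℕ → ℤ} (hc : Binary c) :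
    blockSubst (m * q) (blockSubst m s l (cons 1 x)) (blockSubst m s l (cons 0 y)) c =
      blockSubst m s l (cons (c 0) (blockSubst q x y c)) := by
  funext i
  have hdiv : ∀ j, j / (m * q) = j / m / q := fun j => (Nat.div_div_eq_div_mul j m q).symm
  have hstate := hr.cons_blockSubst hc
  rw [blockSubst, hdiv, hdiv]
  conv_rhs => rw [blockSubst, hstate, hstate]
  by_cases hi : q ∣ (i + 1) / m ∧ m ∣ i + 1
  · obtain ⟨⟨p, hp⟩, -⟩ := hi
    have hy : cons 0 y ((i + 1) / m) = 0 := by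
      rw [hp, mul_comm]
      exact hr.periodic_zero_cons.nat_mul_eq p
    have hx : cons 1 x ((i + 1) / m) = 1 := by
      rw [hp, mul_comm]
      exact hr.periodic_one_cons.nat_mul_eq p
    rcases hc (i / m / q) with h0 | h0 <;> rcases hc ((i + 1) / m / q) with h1 | h1 <;>
      simp only [blockSubst, h0, h1, hx, hy, reduceIte, one_ne_zero] <;> ring
  · have heq : (i + 1) / m / q = i / m / q := by
      by_cases hm : m ∣ i + 1
      · have hq : ¬q ∣ i / m + 1 := fun hq => hi ⟨Nat.succ_div_of_dvd hm ▸ hq, hm⟩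
        rw [Nat.succ_div_of_dvd hm, Nat.succ_div_of_not_dvd hq]
      · rw [Nat.succ_div_of_not_dvd hm]
    rw [heq, sub_self, add_zero]
    simp only [blockSubst]
    split_ifs <;> simp_all only [sub_zero]

end Composition

namespace AdmissiblePair

variable {m q : ℕ} {s l c x y : ℕ → ℤ}

lemma right_nonneg (h : AdmissiblePair m s l) (i : ℕ) : 0 ≤ l i := by
  obtain ⟨t, rfl⟩ := h.exists_shift_eq
  exact h.nonneg _

lemma head_right_pos (h : AdmissiblePair m s l) : 0 < l 0 := by
  refine h.last_pos.trans_le ?_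
  simpa only [shift, zero_add] using head_le_of_toLex_le (h.le_right (m - 1))

lemma blockSubst_nonneg (h : AdmissiblePair m s l) (hc : Binary c) (i : ℕ) :
    0 ≤ blockSubst m s l c i := by
  have hle := head_le_of_toLex_le
    (h.le_shift_blockSubst hc binary_zero rfl (fun _ => (hc.tail _).zero_le) i)
  simp only [shift, zero_add] at hle
  refine le_trans ?_ hle
  obtain ⟨p, rfl⟩ : ∃ p, m = p + 1 := ⟨m - 1, (Nat.sub_add_cancel h.pos).symm⟩
  cases p with
  | zero =>
    rw [blockSubst_last]
    simpa [cons] using Int.add_one_le_iff.2 h.last_pos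
  | succ p =>
    rw [blockSubst_of_lt (by omega), cons, if_neg one_ne_zero]
    exact h.nonneg 0

lemma comp (h : AdmissiblePair m s l) (hr : BinaryPair q x y) :
    AdmissiblePair (m * q) (blockSubst m s l (cons 1 x)) (blockSubst m s l (cons 0 y)) where
  toExtremalPair := h.toExtremalPair.comp hr
  nonneg := h.blockSubst_nonneg hr.binary_one_cons
  last_pos := by
    obtain ⟨a, rfl⟩ : ∃ a, m = a + 1 := ⟨m - 1, (Nat.sub_add_cancel h.pos).symm⟩
    obtain ⟨b, rfl⟩ : ∃ b, q = b + 1 := ⟨q - 1, (Nat.sub_add_cancel hr.pos).symm⟩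
    have hlast := congrFun (h.shift_blockSubst b (cons 1 x)) a
    rw [shift, blockSubst_last] at hlast
    have hx : shift b (cons 1 x) 1 = 1 := by
      rw [shift, add_comm]
      exact hr.last_left
    have hs : 0 < s a := h.last_pos
    have hl : 0 ≤ l a := h.right_nonneg a
    rw [show (a + 1) * (b + 1) - 1 = a + b * (a + 1) by rw [mul_comm, add_mul]; omega, hlast, hx]
    rcases hr.binary_one_cons.tail b 0 with h0 | h0 <;>
      simp only [h0, reduceIte, one_ne_zero] <;> omega

lemma isInfiniteExpansion_blockSubst (h : AdmissiblePair m s l) (hc : Binary c) (h0 : c 0 = 0) :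
    IsInfiniteExpansion (blockSubst m s l c) where
  nonneg := h.blockSubst_nonneg hc
  bddAbove := by
    refine ⟨l 0 + 1, forall_mem_range.2 fun i => ?_⟩
    have hs := head_le_of_toLex_le (h.le_right i)
    have hl := head_le_of_toLex_le (h.shift_right_le i)
    simp only [shift, zero_add] at hs hl
    have hdiff : c ((i + 1) / m) - c (i / m) ≤ 1 := by
      rcases hc ((i + 1) / m) with h1 | h1 <;> rcases hc (i / m) with h2 | h2 <;> omega
    rw [blockSubst]
    split_ifs <;> omega
  head_pos := by
    have hpos := h.head_right_pos
    simp only [blockSubst, Nat.zero_div, h0, if_true, sub_zero]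
    rcases hc ((0 + 1) / m) with h1 | h1 <;> omega
  exists_pos n := by
    by_contra! hnonpos
    have hzero : shift n (blockSubst m s l c) = 0 :=
      funext fun i => (hnonpos i).antisymm (h.blockSubst_nonneg hc _)
    have hb : Binary (cons 1 0) := binary_cons.2 ⟨.inr rfl, binary_zero⟩
    have hle := h.le_shift_blockSubst hc binary_zero rfl (fun _ => (hc.tail _).zero_le) n
    rw [hzero] at hle
    have hge : toLex 0 ≤ toLex (blockSubst m s l (cons 1 0)) :=
      Pi.toLex_monotone (h.blockSubst_nonneg hb)
    have hm := congrFun (h.shift_period_blockSubst (cons 1 0)) 0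
    rw [toLex_inj.1 (hle.antisymm hge), shift_one_cons] at hm
    simp only [shift, blockSubst, Pi.zero_apply, if_true, sub_self, add_zero] at hm
    exact h.head_right_pos.ne hm

lemma baseOf_blockSubst_lt (h : AdmissiblePair m s l) (hc : Binary c) (h0 : c 0 = 0)
    (hyb : Binary y) (hy : y 0 = 1) (hcy : ∀ k, toLex (shift (k + 1) c) ≤ toLex y)
    (hne : c ≠ cons 0 y) :
    baseOf (blockSubst m s l c) < baseOf (blockSubst m s l (cons 0 y)) := by
  refine baseOf_lt_baseOf (h.isInfiniteExpansion_blockSubst hc h0)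
    (h.isInfiniteExpansion_blockSubst (binary_cons.2 ⟨.inl rfl, hyb⟩) rfl)
    (h.shift_blockSubst_le hc hy hcy) ?_
  refine (h.shift_blockSubst_lt hc hy hcy 0).resolve_left ?_
  rintro ⟨k, hk, hkc⟩
  obtain rfl : k = 0 := (Nat.mul_eq_zero.1 hk.symm).resolve_right h.pos.ne'
  exact hne hkc

end AdmissiblePair

/-! ### Mechanical sequences -/

section Mechanical

variable {K : Type*} [Field K] [LinearOrder K] [FloorRing K] {α γ : K}

/-- The lower mechanical sequence of slope `α` and intercept `0`. -/
def lowerMech (α : K) : ℕ → ℤ := fun i => ⌊((i + 1 : ℕ) : K) * α⌋ - ⌊(i : K) * α⌋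

/-- The upper mechanical sequence of slope `α` and intercept `0`. -/
def upperMech (α : K) : ℕ → ℤ := fun i => ⌈((i + 1 : ℕ) : K) * α⌉ - ⌈(i : K) * α⌉

/-- The lower mechanical sequence of slope `α` with its first term incremented. -/
def raisedMech (α : K) : ℕ → ℤ := lowerMech α + Pi.single 0 1

lemma shift_succ_raisedMech (α : K) (k : ℕ) :
    shift (k + 1) (raisedMech α) = shift (k + 1) (lowerMech α) := by
  funext i
  simp [shift, raisedMech]

lemma sum_lowerMech (α : K) (n : ℕ) : ∑ i ∈ Finset.range n, lowerMech α i = ⌊(n : K) * α⌋ :=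
  (Finset.sum_range_sub (fun i : ℕ => ⌊(i : K) * α⌋) n).trans (by simp)

lemma sum_shift_lowerMech (α : K) (k n : ℕ) :
    ∑ i ∈ Finset.range n, shift k (lowerMech α) i = ⌊(n : K) * α + k * α⌋ - ⌊(k : K) * α⌋ := by
  have h := Finset.sum_range_add (lowerMech α) k n
  rw [sum_lowerMech, sum_lowerMech, add_comm k n, Nat.cast_add, add_mul] at h
  rw [h, add_sub_cancel_left]
  simp only [shift, add_comm]

lemma sum_raisedMech (α : K) {n : ℕ} (hn : 0 < n) :
    ∑ i ∈ Finset.range n, raisedMech α i = ⌊(n : K) * α⌋ + 1 := by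
  simp only [raisedMech, Pi.add_apply, Finset.sum_add_distrib, sum_lowerMech]
  rw [Finset.sum_eq_single_of_mem 0 (Finset.mem_range.2 hn) fun i _ hi => Pi.single_eq_of_ne hi 1,
    Pi.single_eq_same]

variable [IsStrictOrderedRing K]

lemma sum_upperMech (α : K) (n : ℕ) : ∑ i ∈ Finset.range n, upperMech α i = ⌈(n : K) * α⌉ :=
  (Finset.sum_range_sub (fun i : ℕ => ⌈(i : K) * α⌉) n).trans (by simp)

lemma lowerMech_le_shift (α : K) (k : ℕ) : toLex (lowerMech α) ≤ toLex (shift k (lowerMech α)) := by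
  refine toLex_le_of_sum_le fun n => ?_
  rw [sum_lowerMech, sum_shift_lowerMech, le_sub_iff_add_le]
  exact Int.le_floor_add _ _

lemma shift_lowerMech_le_upperMech (h : α ≤ γ) (k : ℕ) :
    toLex (shift k (lowerMech α)) ≤ toLex (upperMech γ) := by
  refine toLex_le_of_sum_le fun n => ?_
  rw [sum_upperMech, sum_shift_lowerMech, sub_le_iff_le_add]
  have hn : (n : K) * α ≤ ⌈(n : K) * γ⌉ :=
    (mul_le_mul_of_nonneg_left h n.cast_nonneg).trans (Int.le_ceil _)
  refine (Int.floor_mono (add_le_add_left hn _)).trans_eq ?_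
  rw [Int.floor_intCast_add]

lemma shift_raisedMech_le_upperMech (h : α < γ) (k : ℕ) :
    toLex (shift k (raisedMech α)) ≤ toLex (upperMech γ) := by
  cases k with
  | zero =>
    refine toLex_le_of_sum_le fun n => ?_
    rcases n.eq_zero_or_pos with rfl | hn
    · simp
    · rw [shift_zero, sum_raisedMech α hn, sum_upperMech]
      exact Int.floor_lt_ceil_of_lt (mul_lt_mul_of_pos_left h (Nat.cast_pos.2 hn))
  | succ k =>
    rw [shift_succ_raisedMech]
    exact shift_lowerMech_le_upperMech h.le _

lemma raisedMech_ne_upperMech (h : α < γ) : raisedMech α ≠ upperMech γ := by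
  intro heq
  obtain ⟨n, hn⟩ := exists_lt_nsmul (sub_pos.2 h) 1
  rw [nsmul_eq_mul, mul_sub, lt_sub_iff_add_lt'] at hn
  have hpos : 0 < n := n.pos_of_ne_zero <| by
    rintro rfl
    simp [zero_lt_one.not_gt] at hn
  have hsum := sum_raisedMech α hpos
  rw [heq, sum_upperMech] at hsum
  have hceil : (n : K) * γ ≤ ⌊(n : K) * α⌋ + 1 := by
    rw [← Int.cast_one, ← Int.cast_add, ← hsum]
    exact Int.le_ceil _
  exact hn.not_ge (hceil.trans (add_le_add_left (Int.floor_le _) 1))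

lemma raisedMech_lt_upperMech (h : α < γ) : toLex (raisedMech α) < toLex (upperMech γ) :=
  (shift_raisedMech_le_upperMech h 0).lt_of_ne fun heq =>
    raisedMech_ne_upperMech h (toLex_inj.1 heq)

lemma lowerMech_nonneg (hα : 0 ≤ α) (i : ℕ) : 0 ≤ lowerMech α i :=
  sub_nonneg.2 (Int.floor_mono (by gcongr; omega))

lemma binary_lowerMech (h0 : 0 ≤ α) (h1 : α < 1) : Binary (lowerMech α) := by
  intro i
  have hle : ⌊((i + 1 : ℕ) : K) * α⌋ ≤ ⌊(i : K) * α⌋ + 1 := by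
    rw [← Int.floor_add_one, Nat.cast_succ, add_one_mul]
    exact Int.floor_mono (add_le_add_right h1.le _)
  have hnn := lowerMech_nonneg h0 i
  rw [lowerMech] at hnn ⊢
  omega

lemma binary_upperMech (h0 : 0 ≤ α) (h1 : α ≤ 1) : Binary (upperMech α) := by
  intro i
  have hle : ⌈(i : K) * α⌉ ≤ ⌈((i + 1 : ℕ) : K) * α⌉ := Int.ceil_mono (by gcongr; omega)
  have hge : ⌈((i + 1 : ℕ) : K) * α⌉ ≤ ⌈(i : K) * α⌉ + 1 := by
    rw [← Int.ceil_add_one, Nat.cast_succ, add_one_mul]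
    exact Int.ceil_mono (add_le_add_right h1 _)
  rw [upperMech]
  omega

lemma lowerMech_zero (h0 : 0 ≤ α) (h1 : α < 1) : lowerMech α 0 = 0 := by
  simp [lowerMech, Int.floor_eq_zero_iff, h0, h1]

lemma upperMech_zero (h0 : 0 < α) (h1 : α ≤ 1) : upperMech α 0 = 1 := by
  simp [upperMech, Int.ceil_eq_iff, h0, h1]

lemma binary_raisedMech (h0 : 0 ≤ α) (h1 : α < 1) : Binary (raisedMech α) := by
  rw [← cons_shift_one (raisedMech α), shift_succ_raisedMech]
  refine binary_cons.2 ⟨.inr ?_, (binary_lowerMech h0 h1).tail _⟩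
  simp [raisedMech, lowerMech_zero h0 h1]

lemma upperMech_one : upperMech (1 : K) = 1 := by
  funext i
  simp [upperMech]

lemma raisedMech_zero : raisedMech (0 : K) = cons 1 0 := by
  funext i
  cases i <;> simp [raisedMech, lowerMech, cons]

end Mechanical

section RationalSlope

variable {α : ℚ}

lemma den_mul_self (α : ℚ) : (α.den : ℚ) * α = α.num := by
  rw [mul_comm, Rat.mul_den_eq_num]

lemma mul_mul_den (α : ℚ) (i : ℕ) : (i : ℚ) * α * α.den = (i * α.num : ℤ) := by
  rw [mul_assoc, Rat.mul_den_eq_num]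
  push_cast
  rfl

lemma den_dvd_iff (α : ℚ) (i : ℕ) : α.den ∣ i ↔ (i : ℚ) * α ∈ range ((↑) : ℤ → ℚ) := by
  constructor
  · rintro ⟨k, rfl⟩
    refine ⟨k * α.num, ?_⟩
    rw [Nat.cast_mul, mul_right_comm, den_mul_self]
    push_cast
    ring
  · rintro ⟨z, hz⟩
    have hmul : (i : ℤ) * α.num = z * α.den := by
      have : (i : ℚ) * α.num = z * α.den := by rw [hz, ← den_mul_self]; ring
      exact_mod_cast this
    have hdvd : (α.den : ℤ) ∣ i * α.num := ⟨z, by rw [hmul, mul_comm]⟩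
    have hcop : IsCoprime (α.den : ℤ) α.num :=
      (Int.isCoprime_iff_gcd_eq_one.2 (by simpa [Int.gcd] using α.reduced)).symm
    exact_mod_cast hcop.dvd_of_dvd_mul_right hdvd

lemma ceil_mul_eq (α : ℚ) (i : ℕ) :
    ⌈(i : ℚ) * α⌉ = ⌊(i : ℚ) * α⌋ + if α.den ∣ i then 0 else 1 := by
  split_ifs with h
  · obtain ⟨z, hz⟩ := (den_dvd_iff α i).1 h
    rw [← hz, Int.ceil_intCast, Int.floor_intCast, add_zero]
  · exact (Int.ceil_eq_floor_add_one_iff_notMem _).2 fun hz => h ((den_dvd_iff α i).2 hz)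

lemma add_inv_le_of_lt {q : ℕ} (hq : 0 < q) {x : ℚ} {k n : ℤ} (hx : x * q = k) (hxn : x < n) :
    x + 1 / q ≤ n := by
  have hq' : (0 : ℚ) < q := Nat.cast_pos.2 hq
  have hlt : k < n * q := by
    have := mul_lt_mul_of_pos_right hxn hq'
    rw [hx] at this
    exact_mod_cast this
  refine le_of_mul_le_mul_right (a := (q : ℚ)) ?_ hq'
  rw [add_mul, hx, one_div_mul_cancel hq'.ne']
  exact_mod_cast hlt

lemma ceil_eq_floor_sub_inv {q : ℕ} (hq : 0 < q) {x : ℚ} {k : ℤ} (hx : x * q = k) :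
    ⌈x⌉ = ⌊x - 1 / q⌋ + 1 := by
  have hinv : (0 : ℚ) < 1 / q := one_div_pos.2 (Nat.cast_pos.2 hq)
  have hx' : (x - 1 / q) * q = (k - 1 : ℤ) := by
    rw [sub_mul, hx, one_div_mul_cancel (Nat.cast_ne_zero.2 hq.ne')]
    push_cast
    rfl
  have hlt := add_inv_le_of_lt hq hx' (n := ⌊x - 1 / q⌋ + 1) (by
    push_cast
    exact Int.lt_floor_add_one _)
  refine Int.ceil_eq_iff.2 ⟨?_, by linarith⟩
  push_cast
  linarith [Int.floor_le (x - 1 / q)]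

lemma periodic_lowerMech (α : ℚ) : Function.Periodic (lowerMech α) α.den := by
  have hadd : ∀ i : ℕ, ⌊((i + α.den : ℕ) : ℚ) * α⌋ = ⌊(i : ℚ) * α⌋ + α.num := fun i => by
    rw [Nat.cast_add, add_mul, den_mul_self, Int.floor_add_intCast]
  intro i
  rw [lowerMech, lowerMech, hadd, add_right_comm, hadd]
  ring

lemma exists_mul_eq_sub_inv (α : ℚ) : ∃ (t : ℕ) (z : ℤ), (t : ℚ) * α = z - 1 / α.den := by
  have hden : (0 : ℤ) < α.den := mod_cast α.den_pos
  obtain ⟨u, v, huv⟩ : IsCoprime α.num α.den :=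
    Int.isCoprime_iff_gcd_eq_one.2 (by simpa [Int.gcd] using α.reduced)
  obtain ⟨t, ht⟩ := Int.eq_ofNat_of_zero_le (Int.emod_nonneg (-u) hden.ne')
  refine ⟨t, v - (-u / α.den) * α.num, ?_⟩
  have hmul : (t : ℤ) * α.num = (v - (-u / α.den) * α.num) * α.den - 1 := by
    rw [← ht, Int.emod_def, ← huv]
    ring
  have hmul' : (t : ℚ) * α.num = (v - (-u / α.den : ℤ) * α.num) * α.den - 1 := by
    exact_mod_cast hmul
  have hden' : (α.den : ℚ) ≠ 0 := mod_cast α.den_nz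
  refine mul_right_cancel₀ hden' ?_
  rw [mul_assoc, Rat.mul_den_eq_num, hmul', sub_mul (_ : ℚ) (1 / _),
    one_div_mul_cancel hden']
  push_cast
  rfl

lemma exists_upperMech_eq_shift (α : ℚ) : ∃ t, upperMech α = shift t (lowerMech α) := by
  obtain ⟨t, z, hz⟩ := exists_mul_eq_sub_inv α
  have hceil : ∀ i : ℕ, ⌈(i : ℚ) * α⌉ = ⌊((i + t : ℕ) : ℚ) * α⌋ - z + 1 := fun i => by
    rw [ceil_eq_floor_sub_inv α.den_pos (mul_mul_den α i), Nat.cast_add, add_mul, hz,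
      ← add_sub_assoc, add_sub_right_comm, Int.floor_add_intCast]
    ring
  refine ⟨t, funext fun i => ?_⟩
  rw [upperMech, hceil, hceil, shift, lowerMech, add_right_comm]
  ring

lemma den_dvd_of_shift_lowerMech_eq {j : ℕ} (h : shift j (lowerMech α) = lowerMech α) :
    α.den ∣ j := by
  have hadd : ∀ n : ℕ, ⌊(n : ℚ) * α + j * α⌋ = ⌊(n : ℚ) * α⌋ + ⌊(j : ℚ) * α⌋ := fun n => by
    rw [← sum_lowerMech α n, ← h, sum_shift_lowerMech, sub_add_cancel]
  have hmul : ∀ k : ℕ, ⌊((k * j : ℕ) : ℚ) * α⌋ = k * ⌊(j : ℚ) * α⌋ := fun k => by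
    induction k with
    | zero => simp
    | succ k ih =>
      rw [add_one_mul, Nat.cast_add, add_mul, hadd, ih]
      push_cast
      ring
  obtain ⟨z, hz⟩ := (den_dvd_iff α (α.den * j)).1 (dvd_mul_right _ _)
  have hq := hmul α.den
  rw [← hz, Int.floor_intCast] at hq
  refine (den_dvd_iff α j).2 ⟨⌊(j : ℚ) * α⌋, ?_⟩
  have hden : (α.den : ℚ) ≠ 0 := mod_cast α.den_nz
  refine mul_left_cancel₀ hden ?_
  rw [← mul_assoc, ← Nat.cast_mul, ← hz, hq]
  push_cast
  rfl

lemma extremalPair_mech (α : ℚ) : ExtremalPair α.den (lowerMech α) (upperMech α) where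
  pos := α.den_pos
  periodic := periodic_lowerMech α
  dvd_of_shift_eq _ := den_dvd_of_shift_lowerMech_eq
  exists_shift_eq := exists_upperMech_eq_shift α
  left_le := lowerMech_le_shift α
  le_right := shift_lowerMech_le_upperMech le_rfl

lemma lowerMech_den_sub_one_pos (hα : 0 < α) : 0 < lowerMech α (α.den - 1) := by
  rw [lowerMech, Nat.sub_add_cancel α.den_pos, sub_pos, Int.floor_lt, den_mul_self,
    Int.floor_intCast, ← den_mul_self]
  gcongr
  exact Nat.sub_lt α.den_pos one_pos

lemma admissiblePair_mech (hα : 0 < α) : AdmissiblePair α.den (lowerMech α) (upperMech α) where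
  toExtremalPair := extremalPair_mech α
  nonneg := lowerMech_nonneg hα.le
  last_pos := lowerMech_den_sub_one_pos hα

lemma upperMech_den_sub_one (h0 : 0 < α) (h1 : α < 1) : upperMech α (α.den - 1) = 0 := by
  rw [upperMech, Nat.sub_add_cancel α.den_pos, Nat.cast_sub α.den_pos, sub_mul, den_mul_self,
    Nat.cast_one, one_mul, Int.ceil_intCast, sub_eq_zero, eq_comm, Int.ceil_eq_iff]
  constructor <;> linarith

lemma binaryPair_mech (h0 : 0 < α) (h1 : α < 1) :
    BinaryPair α.den (lowerMech α) (upperMech α) where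
  toExtremalPair := extremalPair_mech α
  binary_left := binary_lowerMech h0.le h1
  head_left := lowerMech_zero h0.le h1
  last_left := (binary_lowerMech h0.le h1 _).resolve_left (lowerMech_den_sub_one_pos h0).ne'
  head_right := upperMech_zero h0 h1.le
  last_right := upperMech_den_sub_one h0 h1

lemma blockSubst_mech (α : ℚ) :
    blockSubst α.den (lowerMech α) (upperMech α) (cons 0 1) = raisedMech α := by
  have hstate : ∀ k, (cons 0 1 : ℕ → ℤ) k = if k = 0 then 0 else 1 := fun k => by cases k <;> rfl
  have hupper : ∀ i, upperMech α i =
      lowerMech α i + ((if α.den ∣ i + 1 then 0 else 1) - if α.den ∣ i then 0 else 1) := fun i => by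
    rw [upperMech, ceil_mul_eq, ceil_mul_eq, lowerMech]
    ring
  have hden := α.den_pos
  funext i
  simp only [blockSubst, hstate, raisedMech, Pi.add_apply, Pi.single_apply,
    Nat.div_eq_zero_iff, hden.ne', false_or]
  by_cases hi : i < α.den
  · have hdvd : α.den ∣ i ↔ i = 0 :=
      ⟨fun h => Nat.eq_zero_of_dvd_of_lt h hi, fun h => h ▸ dvd_zero _⟩
    have hdvd_succ : α.den ∣ i + 1 ↔ ¬ i + 1 < α.den :=
      ⟨fun h => (Nat.le_of_dvd i.succ_pos h).not_gt, fun h => (by omega : α.den = i + 1) ▸ dvd_rfl⟩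
    simp only [hi, if_true, hupper, hdvd, hdvd_succ]
    split_ifs <;> ring
  · have h0 : i ≠ 0 := by omega
    have hsucc : ¬ i + 1 < α.den := by omega
    simp only [hi, hsucc, h0, if_false, if_neg one_ne_zero, sub_self, add_zero]

end RationalSlope

/-! ### Words -/

lemma wplus_concat (v : List ℕ) (d : ℕ) : wplus (v ++ [d]) = v ++ [d + 1] := by simp [wplus]

lemma wminus_concat (v : List ℕ) (d : ℕ) : wminus (v ++ [d]) = v ++ [d - 1] := by simp [wminus]

/-- The first `m` terms of the integer sequence `x` are the letters of the word `w`. -/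
def Spells (w : List ℕ) (m : ℕ) (x : ℕ → ℤ) : Prop :=
  w.map (↑) = (List.range m).map x

namespace Spells

variable {w v : List ℕ} {m n : ℕ} {x y : ℕ → ℤ}

lemma length_eq (h : Spells w m x) : w.length = m := by
  simpa only [List.length_map, List.length_range] using congrArg List.length h

lemma getElem_eq (h : Spells w m x) {i : ℕ} (hi : i < w.length) : (w[i] : ℤ) = x i := by
  have := List.getElem_of_eq h (i := i) (by rwa [List.length_map])
  simpa only [List.getElem_map, List.getElem_range] using this

lemma of_getElem_eq (hw : w.length = m) (h : ∀ i (hi : i < w.length), (w[i] : ℤ) = x i) :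
    Spells w m x :=
  List.ext_getElem (by simp only [List.length_map, List.length_range, hw]) fun i hi _ => by
    rw [List.length_map] at hi
    simp only [List.getElem_map, List.getElem_range, h i hi]

lemma unique (hw : Spells w m x) (hv : Spells v m x) : w = v :=
  List.map_injective_iff.2 Nat.cast_injective (hw.trans hv.symm)

lemma congr (h : Spells w m x) (hxy : ∀ i < m, y i = x i) : Spells w m y :=
  h.trans (List.map_congr_left fun i hi => (hxy i (List.mem_range.1 hi)).symm)

lemma append (hw : Spells w m x) (hv : Spells v n (shift m x)) : Spells (w ++ v) (m + n) x := by
  rw [Spells, List.map_append, hw, hv, List.range_add, List.map_append, List.map_map]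
  simp only [Function.comp_def, add_comm m]
  rfl

lemma rotate (h : Spells w m x) (hx : Function.Periodic x m) (j : ℕ) :
    Spells (w.rotate j) m (shift j x) :=
  of_getElem_eq (w.length_rotate j ▸ h.length_eq) fun i hi => by
    rw [List.getElem_rotate, h.getElem_eq, h.length_eq, hx.map_mod_nat, shift]

lemma le (hw : Spells w m x) (hv : Spells v m y) (h : toLex x ≤ toLex y) : w ≤ v := by
  refine not_lt.1 fun hlt => ?_
  rcases List.lt_iff_exists.1 hlt with ⟨-, hlen⟩ | ⟨i, hiv, hiw, heq, hi⟩
  · exact hlen.ne (hv.length_eq.trans hw.length_eq.symm)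
  · refine (toLex_le_iff.1 h i fun j hj => ?_).not_gt ?_
    · rw [← hw.getElem_eq (hj.trans hiw), ← hv.getElem_eq (hj.trans hiv), heq j hj]
    · rw [← hw.getElem_eq hiw, ← hv.getElem_eq hiv]
      exact_mod_cast hi

lemma exists_eq_concat (h : Spells w (n + 1) x) :
    ∃ (v : List ℕ) (d : ℕ), w = v ++ [d] ∧ Spells v n x ∧ (d : ℤ) = x n := by
  rw [Spells, List.range_succ, List.map_append, List.map_eq_append_iff] at h
  obtain ⟨v, u, rfl, hv, hu⟩ := h
  obtain ⟨d, rfl, hd⟩ := List.map_eq_singleton_iff.1 hu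
  exact ⟨v, d, rfl, hv, hd⟩

lemma concat {d : ℕ} (h : Spells w n x) (hd : (d : ℤ) = x n) : Spells (w ++ [d]) (n + 1) x :=
  h.append (by simp [Spells, shift, hd])

lemma incr_last (h : Spells w (n + 1) x) (hy : ∀ i < n, y i = x i) (hn : y n = x n + 1) :
    Spells (wplus w) (n + 1) y := by
  obtain ⟨v, d, rfl, hv, hd⟩ := h.exists_eq_concat
  rw [wplus_concat]
  exact (hv.congr hy).concat (by rw [hn, ← hd, Nat.cast_succ])

lemma decr_last (h : Spells w (n + 1) x) (hy : ∀ i < n, y i = x i) (hn : y n = x n - 1)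
    (hx : 0 < x n) : Spells (wminus w) (n + 1) y := by
  obtain ⟨v, d, rfl, hv, hd⟩ := h.exists_eq_concat
  rw [wminus_concat]
  exact (hv.congr hy).concat (by omega)

lemma cast_perSeq (h : Spells w m x) (hm : 0 < m) (hx : Function.Periodic x m) :
    ((↑) ∘ perSeq w : ℕ → ℤ) = x := by
  funext i
  have hi : i % w.length < w.length := Nat.mod_lt _ (h.length_eq ▸ hm)
  rw [Function.comp_apply, perSeq, List.getD_eq_getElem _ _ hi, h.getElem_eq hi, h.length_eq,
    hx.map_mod_nat]

lemma cast_wordSeq (h : Spells w m x) {c : ℕ → ℕ} (hc : ((↑) ∘ c : ℕ → ℤ) = shift m x) :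
    ((↑) ∘ wordSeq w c : ℕ → ℤ) = x := by
  funext i
  rw [Function.comp_apply, wordSeq]
  split_ifs with hi
  · rw [List.getD_eq_getElem _ _ hi, h.getElem_eq hi]
  · have := congrFun hc (i - m)
    rw [shift, Nat.sub_add_cancel (not_lt.1 (h.length_eq ▸ hi))] at this
    rw [h.length_eq, ← this, Function.comp_apply]

end Spells

lemma foldl_max_eq_of_isGreatest {α : Type*} [LinearOrder α] {xs : List α} {a b : α}
    (h : IsGreatest {x | x ∈ xs} b) (hab : a ≤ b) : xs.foldl max a = b := by
  rw [List.foldl_max, List.max?_eq_some_iff.2 h, Option.getD_some, max_eq_right hab]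

section SpelledPairs

variable {S r : List ℕ} {m q : ℕ} {s l x y c : ℕ → ℤ}

lemma ExtremalPair.spells_maxCyc (h : ExtremalPair m s l) (hS : Spells S m s) :
    Spells (maxCyc S) m l := by
  obtain ⟨t, rfl⟩ := h.exists_shift_eq
  have hrot := hS.rotate h.periodic
  suffices maxCyc S = S.rotate t by rw [this]; exact hrot t
  refine foldl_max_eq_of_isGreatest ⟨List.mem_map.2 ⟨t % S.length, List.mem_range.2 ?_,
    List.rotate_mod _ _⟩, ?_⟩ (not_lt.1 (List.not_lt_nil _))
  · exact Nat.mod_lt _ (hS.length_eq ▸ h.pos)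
  · rintro _ hw
    obtain ⟨j, -, rfl⟩ := List.mem_map.1 hw
    exact (hrot j).le (hrot t) (h.le_right j)

lemma AdmissiblePair.spells_phiBlock (h : AdmissiblePair m s l) (hS : Spells S m s)
    (hc : Binary c) {p d : ℕ} (hp : p = c 0) (hd : d = c 1) :
    Spells (phiBlock S p d) m (blockSubst m s l c) := by
  obtain ⟨n, rfl⟩ : ∃ n, m = n + 1 := ⟨m - 1, (Nat.sub_add_cancel h.pos).symm⟩
  have hL := h.spells_maxCyc hS
  have hinit : ∀ i < n, blockSubst (n + 1) s l c i = if c 0 = 0 then l i else s i := fun i hi =>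
    blockSubst_of_lt (Nat.succ_lt_succ hi)
  have hlast := blockSubst_last (s := s) (l := l) (c := c) n
  rcases hc 0 with h0 | h0 <;> rcases hc 1 with h1 | h1 <;>
    simp only [h0, h1, Nat.cast_eq_zero, Nat.cast_eq_one, reduceIte, one_ne_zero, sub_self,
      add_zero, sub_zero, zero_sub] at hp hd hinit hlast <;>
    simp only [phiBlock, hp, hd, reduceIte, one_ne_zero]
  · exact hL.congr fun i hi => (Nat.lt_succ_iff_lt_or_eq.1 hi).elim (hinit i) (· ▸ hlast)
  · exact hL.incr_last hinit hlast
  · exact hS.decr_last hinit hlast h.last_pos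
  · exact hS.congr fun i hi => (Nat.lt_succ_iff_lt_or_eq.1 hi).elim (hinit i) (· ▸ hlast)

lemma AdmissiblePair.spells_phiAux (h : AdmissiblePair m s l) (hS : Spells S m s) :
    ∀ {r : List ℕ} {p q : ℕ} {c : ℕ → ℤ}, Binary c → p = c 0 → Spells r q (shift 1 c) →
      Spells (phiAux S p r) (m * q) (blockSubst m s l c)
  | [], _, _, _, _, _, hr => by
    obtain rfl := hr.length_eq
    rfl
  | d :: r, p, q, c, hc, hp, hr => by
    obtain rfl := hr.length_eq
    have hcons : (d : ℤ) :: r.map (↑) = c 1 :: (List.range r.length).map (shift 1 (shift 1 c)) := by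
      have := hr
      rw [Spells, List.length_cons, List.range_succ_eq_map, List.map_cons, List.map_cons,
        List.map_map] at this
      exact this
    obtain ⟨hd, hr'⟩ := List.cons.inj hcons
    rw [List.length_cons, mul_add_one, add_comm]
    refine (h.spells_phiBlock hS hc hp hd).append ?_
    rw [h.shift_period_blockSubst]
    exact h.spells_phiAux hS (hc.tail 1) hd hr'

lemma AdmissiblePair.spells_subst (h : AdmissiblePair m s l) (hS : Spells S m s)
    (hr : BinaryPair q x y) (hrx : Spells r q x) :
    Spells (subst S r) (m * q) (blockSubst m s l (cons 1 x)) := by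
  have hphi := h.spells_phiAux hS (p := 1) hr.binary_one_cons rfl hrx
  have hpos : 0 < r.length := hrx.length_eq ▸ hr.pos
  obtain ⟨d, r, rfl⟩ := List.exists_cons_of_length_pos hpos
  have hd : (d : ℤ) = 0 := (hrx.getElem_eq hpos).trans hr.head_left
  obtain rfl : d = 0 := by exact_mod_cast hd
  exact hphi

end SpelledPairs

/-! ### Christoffel words -/

/-- The Christoffel word of slope `α`, a negative letter being replaced by `0`. -/
def christoffel (α : ℚ) : List ℕ := (List.range α.den).map fun i => (lowerMech α i).toNat

lemma spells_christoffel {α : ℚ} (hα : 0 ≤ α) : Spells (christoffel α) α.den (lowerMech α) := by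
  rw [Spells, christoffel, List.map_map]
  exact List.map_congr_left fun i _ => Int.toNat_of_nonneg (lowerMech_nonneg hα i)

lemma Spells.theta {w : List ℕ} {m : ℕ} {x : ℕ → ℤ} (h : Spells w m x) :
    Spells (theta w) m (x + 1) := by
  have := congrArg (List.map (· + 1)) h
  simpa only [Spells, _root_.theta, List.map_map, Function.comp_def, Nat.cast_add_one,
    Pi.add_def, Pi.one_apply] using this

lemma theta_christoffel {α : ℚ} (hα : 0 ≤ α) : theta (christoffel α) = christoffel (α + 1) := by
  have hmech : lowerMech (α + 1) = lowerMech α + 1 := by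
    funext i
    have hfloor : ∀ j : ℕ, ⌊(j : ℚ) * (α + 1)⌋ = ⌊(j : ℚ) * α⌋ + j := fun j => by
      rw [mul_add_one, Int.floor_add_natCast]
    rw [lowerMech, hfloor, hfloor, Pi.add_apply, lowerMech, Pi.one_apply]
    push_cast
    ring
  have hden : (α + 1).den = α.den := Rat.add_natCast_den α 1
  have h := spells_christoffel (add_nonneg hα zero_le_one)
  rw [hmech, hden] at h
  exact (spells_christoffel hα).theta.unique h

lemma christoffel_zero : christoffel 0 = [0] := by
  simp [christoffel, lowerMech]

lemma christoffel_one : christoffel 1 = [1] := by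
  simp [christoffel, lowerMech]

section Mediant

variable {α β : ℚ}

/-- Farey neighbours `α < β`. -/
def FareyNeighbors (α β : ℚ) : Prop := β.num * α.den - α.num * β.den = 1

/-- The mediant of two fractions in lowest terms. -/
def mediant (α β : ℚ) : ℚ := (α.num + β.num : ℤ) / (α.den + β.den : ℕ)

namespace FareyNeighbors

lemma coprime (h : FareyNeighbors α β) :
    (α.num + β.num).natAbs.Coprime ((α.den + β.den : ℕ) : ℤ).natAbs := by
  rw [FareyNeighbors] at h
  refine Int.isCoprime_iff_gcd_eq_one.1 ⟨-β.den, β.num, ?_⟩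
  push_cast
  linear_combination h

lemma num_mediant (h : FareyNeighbors α β) : (mediant α β).num = α.num + β.num :=
  Rat.num_div_eq_of_coprime (by exact_mod_cast Nat.add_pos_left α.den_pos _) h.coprime

lemma den_mediant (h : FareyNeighbors α β) : (mediant α β).den = α.den + β.den := by
  have := Rat.den_div_eq_of_coprime
    (by exact_mod_cast Nat.add_pos_left α.den_pos _ : (0 : ℤ) < (α.den + β.den : ℕ)) h.coprime
  rwa [Nat.cast_inj] at this

lemma mediant_right (h : FareyNeighbors α β) : FareyNeighbors α (mediant α β) := by
  rw [FareyNeighbors, h.num_mediant, h.den_mediant]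
  rw [FareyNeighbors] at h
  push_cast
  linear_combination h

lemma mediant_left (h : FareyNeighbors α β) : FareyNeighbors (mediant α β) β := by
  rw [FareyNeighbors, h.num_mediant, h.den_mediant]
  rw [FareyNeighbors] at h
  push_cast
  linear_combination h

lemma sub_eq (h : FareyNeighbors α β) : β - α = 1 / (α.den * β.den) := by
  have hα : (α.den : ℚ) ≠ 0 := mod_cast α.den_nz
  have hβ : (β.den : ℚ) ≠ 0 := mod_cast β.den_nz
  have h' : (β.num * α.den - α.num * β.den : ℚ) = 1 := by exact_mod_cast h
  rw [eq_div_iff (mul_ne_zero hα hβ), ← h', ← Rat.mul_den_eq_num α, ← Rat.mul_den_eq_num β]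
  ring

lemma lt (h : FareyNeighbors α β) : α < β := by
  have hα : (0 : ℚ) < α.den := mod_cast α.den_pos
  have hβ : (0 : ℚ) < β.den := mod_cast β.den_pos
  rw [← sub_pos, h.sub_eq]
  exact one_div_pos.2 (mul_pos hα hβ)

end FareyNeighbors

lemma floor_add_eq_floor {q : ℕ} (hq : 0 < q) {x ε : ℚ} {k : ℤ} (hx : x * q = k) (h0 : 0 ≤ ε)
    (hε : ε < 1 / q) : ⌊x + ε⌋ = ⌊x⌋ := by
  have hle := add_inv_le_of_lt hq hx (n := ⌊x⌋ + 1) (by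
    push_cast
    exact Int.lt_floor_add_one _)
  push_cast at hle
  exact Int.floor_eq_iff.2 ⟨by linarith [Int.floor_le x], by linarith⟩

lemma floor_mul_mediant (h : FareyNeighbors α β) {i : ℕ} (hi : i ≤ α.den) :
    ⌊(i : ℚ) * mediant α β⌋ = ⌊(i : ℚ) * α⌋ := by
  have hα : (0 : ℚ) < α.den := mod_cast α.den_pos
  have hγ : (0 : ℚ) < (mediant α β).den := mod_cast (mediant α β).den_pos
  have hlt : (i : ℚ) < (mediant α β).den := by
    rw [h.den_mediant]
    exact_mod_cast hi.trans_lt (Nat.lt_add_of_pos_right β.den_pos)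
  rw [eq_add_of_sub_eq' h.mediant_right.sub_eq, mul_add]
  refine floor_add_eq_floor α.den_pos (mul_mul_den α i) (by positivity) ?_
  rw [mul_one_div, div_lt_div_iff₀ (mul_pos hα hγ) hα, one_mul, mul_comm]
  gcongr

lemma floor_add_den_mul_mediant (h : FareyNeighbors α β) {j : ℕ} (hj : j ≤ β.den) :
    ⌊((j + α.den : ℕ) : ℚ) * mediant α β⌋ = ⌊(j : ℚ) * β⌋ + α.num := by
  have hβ : (0 : ℚ) < β.den := mod_cast β.den_pos
  have hγ : (0 : ℚ) < (mediant α β).den := mod_cast (mediant α β).den_pos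
  have hlt : (β.den : ℚ) < (mediant α β).den := by
    rw [h.den_mediant]
    exact_mod_cast Nat.lt_add_of_pos_left α.den_pos
  have hα : (α.den : ℚ) * (mediant α β - α) = 1 / (mediant α β).den := by
    rw [h.mediant_right.sub_eq]
    field_simp
  have hε : (j : ℚ) * (β - mediant α β) ≤ 1 / (mediant α β).den := by
    rw [h.mediant_left.sub_eq, mul_one_div, div_le_div_iff₀ (by positivity) hγ, one_mul, mul_comm]
    gcongr
  have hε0 : 0 ≤ (j : ℚ) * (β - mediant α β) :=
    mul_nonneg j.cast_nonneg (sub_nonneg.2 h.mediant_left.lt.le)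
  have hsum : ((j + α.den : ℕ) : ℚ) * mediant α β =
      j * β + (1 / (mediant α β).den - j * (β - mediant α β)) + α.num := by
    push_cast
    linear_combination hα + den_mul_self α
  rw [hsum, Int.floor_add_intCast, floor_add_eq_floor β.den_pos (mul_mul_den β j)]
  · exact sub_nonneg.2 hε
  · exact (sub_le_self _ hε0).trans_lt (one_div_lt_one_div_of_lt hβ hlt)

lemma lowerMech_mediant (h : FareyNeighbors α β) {i : ℕ} (hi : i < α.den) :
    lowerMech (mediant α β) i = lowerMech α i := by
  rw [lowerMech, floor_mul_mediant h hi, floor_mul_mediant h hi.le, lowerMech]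

lemma shift_lowerMech_mediant (h : FareyNeighbors α β) {i : ℕ} (hi : i < β.den) :
    shift α.den (lowerMech (mediant α β)) i = lowerMech β i := by
  rw [shift, lowerMech, add_right_comm, floor_add_den_mul_mediant h hi,
    floor_add_den_mul_mediant h hi.le, lowerMech, add_sub_add_right_eq_sub]

lemma christoffel_append_christoffel (h : FareyNeighbors α β) (hα : 0 ≤ α) :
    christoffel α ++ christoffel β = christoffel (mediant α β) := by
  have hleft := (spells_christoffel hα).congr (y := lowerMech (mediant α β))
    fun i hi => lowerMech_mediant h hi
  have hright := (spells_christoffel (hα.trans h.lt.le)).congr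
    (y := shift α.den (lowerMech (mediant α β))) fun i hi => shift_lowerMech_mediant h hi
  have hmed := spells_christoffel (hα.trans h.mediant_right.lt.le)
  rw [h.den_mediant] at hmed
  exact (hleft.append hright).unique hmed

end Mediant

/-! ### Farey words -/

lemma isChain_fareyInsert {R : List ℕ → List ℕ → Prop}
    (hR : ∀ u v, R u v → R u (u ++ v) ∧ R (u ++ v) v) :
    ∀ {ws : List (List ℕ)}, ws.IsChain R → (fareyInsert ws).IsChain R
  | [], _ => .nil
  | [_], _ => .singleton _
  | [u, v], h => by
    obtain ⟨huv, -⟩ := List.isChain_cons_cons.1 h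
    simpa [fareyInsert] using hR u v huv
  | u :: v :: w :: ws, h => by
    obtain ⟨huv, hvs⟩ := List.isChain_cons_cons.1 h
    exact .cons_cons (hR u v huv).1 (.cons_cons (hR u v huv).2 (isChain_fareyInsert hR hvs))

lemma forall_mem_fareyInsert {R : List ℕ → List ℕ → Prop} {P : List ℕ → Prop}
    (hP : ∀ u v, R u v → P (u ++ v)) :
    ∀ {ws : List (List ℕ)}, ws.IsChain R → (∀ w ∈ ws, P w) → ∀ w ∈ fareyInsert ws, P w
  | [], _, h => h
  | [_], _, h => h
  | u :: v :: ws, hchain, h => by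
    obtain ⟨huv, hvs⟩ := List.isChain_cons_cons.1 hchain
    rw [List.forall_mem_cons] at h
    rw [fareyInsert, List.forall_mem_cons, List.forall_mem_cons]
    exact ⟨h.1, hP u v huv, forall_mem_fareyInsert hP hvs h.2⟩

/-- The pairs of Christoffel words of Farey neighbours in `[0, 1]`. -/
def IsChristoffelPair (u v : List ℕ) : Prop :=
  ∃ α β, FareyNeighbors α β ∧ 0 ≤ α ∧ β ≤ 1 ∧ u = christoffel α ∧ v = christoffel β

lemma IsChristoffelPair.append {u v : List ℕ} (h : IsChristoffelPair u v) :
    IsChristoffelPair u (u ++ v) ∧ IsChristoffelPair (u ++ v) v := by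
  obtain ⟨α, β, h, hα, hβ, rfl, rfl⟩ := h
  have happend := christoffel_append_christoffel h hα
  exact ⟨⟨α, mediant α β, h.mediant_right, hα, h.mediant_left.lt.le.trans hβ, rfl, happend⟩,
    ⟨mediant α β, β, h.mediant_left, hα.trans h.mediant_right.lt.le, hβ, happend, rfl⟩⟩

lemma IsChristoffelPair.append_mem {u v : List ℕ} (h : IsChristoffelPair u v) :
    u ++ v ∈ christoffel '' Icc 0 1 := by
  obtain ⟨α, β, h, hα, hβ, heq, -⟩ := h.append.2
  exact ⟨α, ⟨hα, h.lt.le.trans hβ⟩, heq.symm⟩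

lemma isChain_fareyLevel : ∀ n, (fareyLevel n).IsChain IsChristoffelPair
  | 0 => List.isChain_pair.2 ⟨0, 1, by simp [FareyNeighbors], le_rfl, le_rfl, christoffel_zero.symm,
      christoffel_one.symm⟩
  | n + 1 => isChain_fareyInsert (fun _ _ => IsChristoffelPair.append) (isChain_fareyLevel n)

lemma forall_mem_fareyLevel : ∀ n, ∀ w ∈ fareyLevel n, w ∈ christoffel '' Icc 0 1
  | 0 => by
    simp only [fareyLevel, List.forall_mem_cons, ← christoffel_zero, ← christoffel_one]
    exact ⟨mem_image_of_mem _ ⟨le_rfl, zero_le_one⟩, mem_image_of_mem _ ⟨zero_le_one, le_rfl⟩,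
      List.forall_mem_nil _⟩
  | n + 1 => forall_mem_fareyInsert (fun _ _ => IsChristoffelPair.append_mem)
      (isChain_fareyLevel n) (forall_mem_fareyLevel n)

lemma fareySet_subset : FareySet ⊆ christoffel '' Ioo 0 1 := by
  rintro w ⟨⟨n, hn⟩, hw0, hw1⟩
  obtain ⟨α, ⟨h0, h1⟩, rfl⟩ := forall_mem_fareyLevel n w hn
  exact ⟨α, ⟨h0.lt_of_ne' fun h => hw0 (h ▸ christoffel_zero),
    h1.lt_of_ne fun h => hw1 (h ▸ christoffel_one)⟩, rfl⟩

lemma mapsTo_theta : MapsTo theta (christoffel '' Ioi 0) (christoffel '' Ioi 0) := by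
  rintro _ ⟨α, hα, rfl⟩
  exact ⟨α + 1, mem_Ioi.2 (add_pos hα one_pos), (theta_christoffel (le_of_lt hα)).symm⟩

lemma fareyExt_subset : FareyExt ⊆ christoffel '' Ioi 0 := by
  rintro _ ⟨v, hv, k, rfl⟩
  refine mapsTo_theta.iterate k ?_
  rcases hv with hv | rfl
  · exact image_mono Ioo_subset_Ioi_self (fareySet_subset hv)
  · exact ⟨1, mem_Ioi.2 one_pos, christoffel_one⟩

/-! ### Endpoints of the intervals -/

section Endpoints

variable {S : List ℕ} {m : ℕ} {s l : ℕ → ℤ}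

lemma valSeq_eq_value (β : ℝ) (c : ℕ → ℕ) : valSeq β c = value β ((↑) ∘ c) := by
  simp only [valSeq, value, Function.comp_apply, Int.cast_natCast]

lemma epsilon_valSeq_eq_baseOf {c : ℕ → ℕ} {x : ℕ → ℤ} (h : ((↑) ∘ c : ℕ → ℤ) = x) :
    (Classical.epsilon fun β : ℝ => 1 < β ∧ valSeq β c = 1) = baseOf x := by
  simp only [valSeq_eq_value, h]
  rfl

lemma blockSubst_zero (m : ℕ) (s l : ℕ → ℤ) : blockSubst m s l 0 = l := by
  funext i
  simp [blockSubst]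

lemma blockSubst_one (m : ℕ) (s l : ℕ → ℤ) : blockSubst m s l 1 = s := by
  funext i
  simp [blockSubst]

lemma betaL_eq (h : AdmissiblePair m s l) (hS : Spells S m s) :
    betaL S = baseOf (blockSubst m s l 0) := by
  rw [blockSubst_zero]
  exact epsilon_valSeq_eq_baseOf ((h.spells_maxCyc hS).cast_perSeq h.pos h.periodic_right)

lemma betaR_eq (h : AdmissiblePair m s l) (hS : Spells S m s) :
    betaR S = baseOf (blockSubst m s l (cons 0 1)) := by
  have hplus :=
    h.spells_phiBlock hS (binary_cons.2 ⟨.inl rfl, binary_one⟩) (p := 0) (d := 1) rfl rfl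
  refine epsilon_valSeq_eq_baseOf (hplus.cast_wordSeq ?_)
  rw [h.shift_period_blockSubst, shift_one_cons, blockSubst_one]
  exact hS.cast_perSeq h.pos h.periodic

lemma betaStar_eq (h : AdmissiblePair m s l) (hS : Spells S m s) :
    betaStar S = baseOf (blockSubst m s l (cons 0 (cons 1 0))) := by
  have hb : Binary (cons 1 0) := binary_cons.2 ⟨.inr rfl, binary_zero⟩
  have hplus := h.spells_phiBlock hS (binary_cons.2 ⟨.inl rfl, hb⟩) (p := 0) (d := 1) rfl rfl
  have hminus := h.spells_phiBlock hS hb (p := 1) (d := 0) rfl rfl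
  rw [← shift_one_cons 0 (cons 1 0), ← h.shift_period_blockSubst] at hminus
  refine epsilon_valSeq_eq_baseOf ((hplus.append hminus).cast_wordSeq ?_)
  rw [← shift_shift, h.shift_period_blockSubst, h.shift_period_blockSubst, shift_one_cons,
    shift_one_cons, blockSubst_zero]
  exact (h.spells_maxCyc hS).cast_perSeq h.pos h.periodic_right

lemma AdmissiblePair.baseOf_raisedMech_lt_baseOf_upperMech {α γ : ℚ} (h : AdmissiblePair m s l)
    (hα : 0 ≤ α) (hαγ : α < γ) (hγ : γ ≤ 1) :
    baseOf (blockSubst m s l (cons 0 (raisedMech α))) <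
      baseOf (blockSubst m s l (cons 0 (upperMech γ))) := by
  have hγ0 := hα.trans_lt hαγ
  refine h.baseOf_blockSubst_lt (binary_cons.2 ⟨.inl rfl, binary_raisedMech hα (hαγ.trans_le hγ)⟩)
    rfl (binary_upperMech hγ0.le hγ) (upperMech_zero hγ0 hγ) (fun k => ?_) fun heq => ?_
  · rw [← shift_shift, shift_one_cons]
    exact shift_raisedMech_le_upperMech hαγ k
  · exact raisedMech_ne_upperMech hαγ (congrArg (shift 1) heq)

lemma betaL_subst_christoffel {α : ℚ} (h : AdmissiblePair m s l) (hS : Spells S m s)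
    (hα0 : 0 < α) (hα1 : α < 1) :
    betaL (subst S (christoffel α)) = baseOf (blockSubst m s l (cons 0 (upperMech α))) := by
  have hr := binaryPair_mech hα0 hα1
  rw [betaL_eq (h.comp hr) (h.spells_subst hS hr (spells_christoffel hα0.le)),
    blockSubst_comp hr binary_zero, blockSubst_zero, Pi.zero_apply]

lemma betaR_subst_christoffel {α : ℚ} (h : AdmissiblePair m s l) (hS : Spells S m s)
    (hα0 : 0 < α) (hα1 : α < 1) :
    betaR (subst S (christoffel α)) = baseOf (blockSubst m s l (cons 0 (raisedMech α))) := by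
  have hr := binaryPair_mech hα0 hα1
  rw [betaR_eq (h.comp hr) (h.spells_subst hS hr (spells_christoffel hα0.le)),
    blockSubst_comp hr (binary_cons.2 ⟨.inl rfl, binary_one⟩), blockSubst_mech, cons]

end Endpoints

/-! ### Disjointness of the intervals -/

lemma disjoint_Icc_Icc_of_lt {a b c d : ℝ} (h : b < c) : Disjoint (Icc a b) (Icc c d) :=
  (Iic_disjoint_Ici.2 h.not_ge).mono Icc_subset_Iic_self Icc_subset_Ici_self

lemma pairwiseDisjoint_of_subset_image {ι X Y : Type*} [LinearOrder ι] {f : ι → X} {A : Set ι}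
    {T : Set X} {J : X → Set Y} (hT : T ⊆ f '' A)
    (h : ∀ a ∈ A, ∀ b ∈ A, a < b → Disjoint (J (f a)) (J (f b))) : T.PairwiseDisjoint J := by
  intro _ hx _ hy hne
  obtain ⟨a, ha, rfl⟩ := hT hx
  obtain ⟨b, hb, rfl⟩ := hT hy
  rcases lt_or_gt_of_ne (ne_of_apply_ne f hne) with hab | hab
  · exact h a ha b hb hab
  · exact (h b hb a ha hab).symm

lemma pairwiseDisjoint_Jint_fareyExt : FareyExt.PairwiseDisjoint Jint := by
  refine pairwiseDisjoint_of_subset_image fareyExt_subset fun α hα γ hγ hαγ =>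
    disjoint_Icc_Icc_of_lt ?_
  rw [mem_Ioi] at hα hγ
  have hpairα := admissiblePair_mech hα
  have hpairγ := admissiblePair_mech hγ
  have hexpα := hpairα.isInfiniteExpansion_blockSubst (binary_cons.2 ⟨.inl rfl, binary_one⟩) rfl
  have hexpγ := hpairγ.isInfiniteExpansion_blockSubst binary_zero rfl
  rw [betaR_eq hpairα (spells_christoffel hα.le), betaL_eq hpairγ (spells_christoffel hγ.le)]
  rw [blockSubst_mech] at hexpα ⊢
  rw [blockSubst_zero] at hexpγ ⊢
  exact baseOf_lt_baseOf hexpα hexpγ (shift_raisedMech_le_upperMech hαγ)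
    (raisedMech_lt_upperMech hαγ)

/-- Words `S` for which `S^∞` and `L(S)^∞` form an admissible pair. -/
def IsAdmissibleWord (S : List ℕ) : Prop := ∃ m s l, AdmissiblePair m s l ∧ Spells S m s

lemma isAdmissibleWord_of_mem_fareyExt {S : List ℕ} (hS : S ∈ FareyExt) : IsAdmissibleWord S := by
  obtain ⟨α, hα, rfl⟩ := fareyExt_subset hS
  exact ⟨_, _, _, admissiblePair_mech hα, spells_christoffel (le_of_lt hα)⟩

namespace IsAdmissibleWord

variable {S r : List ℕ} {rs rs' : List (List ℕ)}

lemma subst_farey (h : IsAdmissibleWord S) (hr : r ∈ FareySet) : IsAdmissibleWord (subst S r) := by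
  obtain ⟨m, s, l, h, hS⟩ := h
  obtain ⟨α, ⟨h0, h1⟩, rfl⟩ := fareySet_subset hr
  have hα := binaryPair_mech h0 h1
  exact ⟨_, _, _, h.comp hα, h.spells_subst hS hα (spells_christoffel h0.le)⟩

lemma foldl_subst (h : IsAdmissibleWord S) (hrs : ∀ r ∈ rs, r ∈ FareySet) :
    IsAdmissibleWord (rs.foldl subst S) :=
  List.foldlRecOn rs subst h fun _ hw _ hr => hw.subst_farey (hrs _ hr)

lemma betaL_lt_betaStar (h : IsAdmissibleWord S) : betaL S < betaStar S := by
  obtain ⟨m, s, l, h, hS⟩ := h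
  have hle : toLex (0 : ℕ → ℤ) ≤ toLex (cons 1 0) := (binary_cons.2 ⟨.inr rfl, binary_zero⟩).zero_le
  rw [betaL_eq h hS, betaStar_eq h hS]
  exact h.baseOf_blockSubst_lt binary_zero rfl (binary_cons.2 ⟨.inr rfl, binary_zero⟩) rfl
    (fun _ => hle) fun heq => zero_ne_one (congrFun heq 1)

lemma betaStar_lt_betaR (h : IsAdmissibleWord S) : betaStar S < betaR S := by
  obtain ⟨m, s, l, h, hS⟩ := h
  rw [betaStar_eq h hS, betaR_eq h hS, ← raisedMech_zero (K := ℚ), ← upperMech_one (K := ℚ)]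
  exact h.baseOf_raisedMech_lt_baseOf_upperMech le_rfl one_pos le_rfl

lemma betaStar_lt_betaL_subst (h : IsAdmissibleWord S) (hr : r ∈ FareySet) :
    betaStar S < betaL (subst S r) := by
  obtain ⟨m, s, l, h, hS⟩ := h
  obtain ⟨α, ⟨h0, h1⟩, rfl⟩ := fareySet_subset hr
  rw [betaStar_eq h hS, betaL_subst_christoffel h hS h0 h1, ← raisedMech_zero (K := ℚ)]
  exact h.baseOf_raisedMech_lt_baseOf_upperMech le_rfl h0 h1.le

lemma betaR_subst_lt_betaR (h : IsAdmissibleWord S) (hr : r ∈ FareySet) :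
    betaR (subst S r) < betaR S := by
  obtain ⟨m, s, l, h, hS⟩ := h
  obtain ⟨α, ⟨h0, h1⟩, rfl⟩ := fareySet_subset hr
  rw [betaR_eq h hS, betaR_subst_christoffel h hS h0 h1, ← upperMech_one (K := ℚ)]
  exact h.baseOf_raisedMech_lt_baseOf_upperMech h0.le h1 le_rfl

lemma Iint_subset_Jint (h : IsAdmissibleWord S) : Iint S ⊆ Jint S :=
  Icc_subset_Icc_right h.betaStar_lt_betaR.le

lemma Jint_subst_subset (h : IsAdmissibleWord S) (hr : r ∈ FareySet) :
    Jint (subst S r) ⊆ Jint S :=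
  Icc_subset_Icc (h.betaL_lt_betaStar.trans (h.betaStar_lt_betaL_subst hr)).le
    (h.betaR_subst_lt_betaR hr).le

lemma disjoint_Iint_Jint_subst (h : IsAdmissibleWord S) (hr : r ∈ FareySet) :
    Disjoint (Iint S) (Jint (subst S r)) :=
  disjoint_Icc_Icc_of_lt (h.betaStar_lt_betaL_subst hr)

lemma pairwiseDisjoint_Jint_subst (h : IsAdmissibleWord S) :
    FareySet.PairwiseDisjoint fun r => Jint (subst S r) := by
  obtain ⟨m, s, l, h, hS⟩ := h
  refine pairwiseDisjoint_of_subset_image fareySet_subset fun α hα γ hγ hαγ =>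
    disjoint_Icc_Icc_of_lt ?_
  rw [betaR_subst_christoffel h hS hα.1 hα.2, betaL_subst_christoffel h hS hγ.1 hγ.2]
  exact h.baseOf_raisedMech_lt_baseOf_upperMech hα.1.le hαγ hγ.2.le

lemma Jint_foldl_subset (h : IsAdmissibleWord S) (hrs : ∀ r ∈ rs, r ∈ FareySet) :
    Jint (rs.foldl subst S) ⊆ Jint S := by
  induction rs generalizing S with
  | nil => exact subset_rfl
  | cons r rs ih =>
    obtain ⟨hr, hrs⟩ := List.forall_mem_cons.1 hrs
    exact (ih (h.subst_farey hr) hrs).trans (h.Jint_subst_subset hr)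

lemma Iint_foldl_subset (h : IsAdmissibleWord S) (hrs : ∀ r ∈ rs, r ∈ FareySet) :
    Iint (rs.foldl subst S) ⊆ Jint S :=
  (h.foldl_subst hrs).Iint_subset_Jint.trans (h.Jint_foldl_subset hrs)

lemma disjoint_Iint_Iint_foldl (h : IsAdmissibleWord S) (hr : r ∈ FareySet)
    (hrs : ∀ r ∈ rs, r ∈ FareySet) :
    Disjoint (Iint S) (Iint (rs.foldl subst (subst S r))) :=
  (h.disjoint_Iint_Jint_subst hr).mono_right ((h.subst_farey hr).Iint_foldl_subset hrs)

lemma disjoint_Iint_foldl (h : IsAdmissibleWord S) (hrs : ∀ r ∈ rs, r ∈ FareySet)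
    (hrs' : ∀ r ∈ rs', r ∈ FareySet) (hne : rs.foldl subst S ≠ rs'.foldl subst S) :
    Disjoint (Iint (rs.foldl subst S)) (Iint (rs'.foldl subst S)) := by
  induction rs generalizing rs' S with
  | nil =>
    cases rs' with
    | nil => exact absurd rfl hne
    | cons r' rs' =>
      obtain ⟨hr', htail'⟩ := List.forall_mem_cons.1 hrs'
      exact h.disjoint_Iint_Iint_foldl hr' htail'
  | cons r rs ih =>
    obtain ⟨hr, htail⟩ := List.forall_mem_cons.1 hrs
    cases rs' with
    | nil => exact (h.disjoint_Iint_Iint_foldl hr htail).symm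
    | cons r' rs' =>
      obtain ⟨hr', htail'⟩ := List.forall_mem_cons.1 hrs'
      rcases eq_or_ne r r' with rfl | hrr'
      · exact ih (h.subst_farey hr) htail htail' hne
      · exact (h.pairwiseDisjoint_Jint_subst hr hr' hrr').mono
          ((h.subst_farey hr).Iint_foldl_subset htail)
          ((h.subst_farey hr').Iint_foldl_subset htail')

end IsAdmissibleWord

lemma exists_foldl_of_mem_lambdaExt {S : List ℕ} (hS : S ∈ LambdaExt) :
    ∃ s ∈ FareyExt, ∃ rs : List (List ℕ), (∀ r ∈ rs, r ∈ FareySet) ∧ S = rs.foldl subst s := by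
  simp only [LambdaExt, mem_iUnion] at hS
  obtain ⟨-, -, s, hs, rs, -, hrs, rfl⟩ := hS
  exact ⟨s, hs, rs, hrs, rfl⟩

lemma isAdmissibleWord_of_mem_lambdaExt {S : List ℕ} (hS : S ∈ LambdaExt) :
    IsAdmissibleWord S := by
  obtain ⟨s, hs, rs, hrs, rfl⟩ := exists_foldl_of_mem_lambdaExt hS
  exact (isAdmissibleWord_of_mem_fareyExt hs).foldl_subst hrs

lemma pairwiseDisjoint_Iint_lambdaExt : LambdaExt.PairwiseDisjoint Iint := by
  intro _ hS _ hS' hne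
  obtain ⟨s, hs, rs, hrs, rfl⟩ := exists_foldl_of_mem_lambdaExt hS
  obtain ⟨s', hs', rs', hrs', rfl⟩ := exists_foldl_of_mem_lambdaExt hS'
  have had := isAdmissibleWord_of_mem_fareyExt hs
  rcases eq_or_ne s s' with rfl | hss'
  · exact had.disjoint_Iint_foldl hrs hrs' hne
  · exact (pairwiseDisjoint_Jint_fareyExt hs hs' hss').mono (had.Iint_foldl_subset hrs)
      ((isAdmissibleWord_of_mem_fareyExt hs').Iint_foldl_subset hrs')

end FareyIntervals

/-- (i) The Farey intervals `J^s`, `s ∈ F_e`, are pairwise disjoint.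
(ii) For each `S ∈ Λ_e`, the intervals `J^{S•r}`, `r ∈ F`, are pairwise disjoint
subintervals of `J^S`. (iii) The basic intervals `I^S`, `S ∈ Λ_e`, are pairwise
disjoint. -/
theorem intervals_disjoint :
    (∀ s ∈ FareyExt, ∀ s' ∈ FareyExt, s ≠ s' → Disjoint (Jint s) (Jint s')) ∧
    (∀ S ∈ LambdaExt, (∀ r ∈ FareySet, Jint (subst S r) ⊆ Jint S) ∧
      ∀ r ∈ FareySet, ∀ r' ∈ FareySet, r ≠ r' →
        Disjoint (Jint (subst S r)) (Jint (subst S r'))) ∧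
    (∀ S ∈ LambdaExt, ∀ S' ∈ LambdaExt, S ≠ S' → Disjoint (Iint S) (Iint S')) := by
  refine ⟨fun _ hs _ hs' hne => FareyIntervals.pairwiseDisjoint_Jint_fareyExt hs hs' hne,
    fun S hS => ?_,
    fun _ hS _ hS' hne => FareyIntervals.pairwiseDisjoint_Iint_lambdaExt hS hS' hne⟩
  have h := FareyIntervals.isAdmissibleWord_of_mem_lambdaExt hS
  exact ⟨fun _ hr => h.Jint_subst_subset hr,
    fun _ hr _ hr' hne => h.pairwiseDisjoint_Jint_subst hr hr' hne⟩
end
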